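/- arXiv:2005.00243 — 5 statements merged into one kernel-verified Lean document; each statement's English description precedes it below -/
import Mathlib

section
/- Let K ∈ ℝ, N > 1 and let (X,d,m) be a metric measure space with m(X) = 1 and supp m = X satisfying CD₁(K,N). Then (X,d,m) satisfies the following version of the measure contraction property MCP(K,N): for every μ0 ∈ P(X) absolutely continuous with respect to m and having finite p-th moment for every p ∈ [1,∞), and every x0 ∈ X, there exists a curve (μ_t)_{t∈[0,1]} with μ_0 = μ0 and μ_1 = δ_{x0} which is a W_p-geodesic for every p ∈ [1,∞), such that, writing the Lebesgue decomposition μ_t = ρ_t·m + μ_t^s, for all t ∈ [0,1) and all N' ≥ N one has ∫_X ρ_t^{1−1/N'} dm ≥ ∫_X τ^{(1−t)}_{K,N'}(d(x,x0))·ρ_0(x)^{−1/N'} μ0(dx). -/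
/-!
The point mass at `x0` is approximated by the normalized restrictions of `m` to the balls
`ball x0 (1 / (n + 1))`; the curvature condition yields dynamical plans from `μ0` to these measures,
and the required curve is made of the time marginals of a limit point of the plans.

*Compactness.* Transporting the uniform measure of a ball towards its centre, the entropy inequality
and Jensen's inequality (`entropy_le_measure_rpow`) show that `m` is doubling at bounded scales
(`ball_contraction`, `exists_doubling`). Hence `X` is proper (`properSpace_of_CDone`), geodesics
with endpoints in given balls form a compact set (`isCompact_geodesics`, Arzelà–Ascoli), the plans
are tight, and Prokhorov's theorem gives a limit plan (`exists_limit_plan`). It is concentrated on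
geodesics ending at `x0`.

*Geodesics for all `p`.* For such a plan the distance from the time `t` marginal to `x0` in `L^p` is
`1 - t` times that at time `0`. The plan bounds `W_p` between two marginals from above, and
Minkowski's inequality for the distance to `x0` along an arbitrary coupling bounds it from below by
the same number (`Wp_eval`).

*Entropy.* The functional `ν ↦ ∫ ρ ^ α dm`, with `0 < α < 1` and `ρ` the density of the absolutely
continuous part of `ν`, is an infimum of affine functionals obtained from the tangent lines of
`r ↦ r ^ α` at continuous positive functions, so it is upper semicontinuous for weak convergence
(`entropy_usc`). For `0 < t < 1` the coefficient `τ` is lower semicontinuous in the distance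
(`tauCoef_lsc`), so the inequality passes to the limit (`entropy_limit`). At `t = 0` it amounts to
`τ = 1` for `μ0`-almost every point, that is, no mass of `μ0` beyond the critical distance from
`x0`, and this follows from the inequality at `t = 1 / 2`, whose right side is finite
(`entropy_zero`).
-/

open MeasureTheory Set ENNReal

noncomputable section

namespace CDNote

section Sets
variable {X : Type*} [MetricSpace X]

/-- A constant speed geodesic, as a continuous map from `[0,1]`. -/
def IsCSG (γ : C(unitInterval, X)) : Prop :=
  ∀ s t : unitInterval, dist (γ s) (γ t) = |(s : ℝ) - (t : ℝ)| * dist (γ 0) (γ 1)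

/-- The set `Γ_u` associated to a `1`-Lipschitz function `u`. -/
def Gamma (u : X → ℝ) : Set (X × X) := {p | u p.1 - u p.2 = dist p.1 p.2}

/-- The set `Γ_u⁻¹`. -/
def GammaInv (u : X → ℝ) : Set (X × X) := {p | (p.2, p.1) ∈ Gamma u}

/-- The transport relation `R_u = Γ_u ∪ Γ_u⁻¹`. -/
def Ru (u : X → ℝ) : Set (X × X) := Gamma u ∪ GammaInv u

/-- The transport set `T_u = P₁(R_u \ {x = y})`. -/
def Tu (u : X → ℝ) : Set X := {x | ∃ y, (x, y) ∈ Ru u ∧ y ≠ x}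

/-- The set of forward branching points `A_{+,u}`. -/
def Aplus (u : X → ℝ) : Set X :=
  {x | x ∈ Tu u ∧ ∃ z w, (x, z) ∈ Gamma u ∧ (x, w) ∈ Gamma u ∧ (z, w) ∉ Ru u}

/-- The set of backward branching points `A_{-,u}`. -/
def Aminus (u : X → ℝ) : Set X :=
  {x | x ∈ Tu u ∧ ∃ z w, (z, x) ∈ Gamma u ∧ (w, x) ∈ Gamma u ∧ (z, w) ∉ Ru u}

/-- The non-branched transport set `T_u^b = T_u \ (A_{+,u} ∪ A_{-,u})`. -/
def Tub (u : X → ℝ) : Set X := Tu u \ (Aplus u ∪ Aminus u)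

/-- The non-branched transport relation `R_u^b = R_u ∩ (T_u^b × T_u^b)`. -/
def Rub (u : X → ℝ) : Set (X × X) := Ru u ∩ (Tub u) ×ˢ (Tub u)

/-- A closed non-null ray for `u`: the image of a curve parametrized by arclength on a closed
nondegenerate interval, along which `u` is affine with slope `-1`. -/
def IsRay (u : X → ℝ) (S : Set X) : Prop :=
  ∃ (I : Set ℝ) (γ : ℝ → X),
    IsClosed I ∧ I.OrdConnected ∧ (∃ a ∈ I, ∃ b ∈ I, a < b) ∧
    S = γ '' I ∧
    (∀ s ∈ I, ∀ t ∈ I, dist (γ s) (γ t) = |s - t|) ∧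
    (∀ s ∈ I, ∀ t ∈ I, u (γ s) - u (γ t) = t - s)

/-- A transport ray of `Γ_u`: a ray that is maximal with respect to inclusion. -/
def IsTransportRay (u : X → ℝ) (S : Set X) : Prop :=
  IsRay u S ∧ ∀ S' : Set X, IsRay u S' → S ⊆ S' → S' = S

end Sets

section MMS
variable {X : Type*} [MetricSpace X] [MeasurableSpace X]

/-- `π` is a coupling of `μ` and `ν`. -/
def IsCoupling (π : Measure (X × X)) (μ ν : Measure X) : Prop :=
  π.map Prod.fst = μ ∧ π.map Prod.snd = ν

/-- The infimal `p`-th power transport cost between two measures. -/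
def Wcost (p : ℝ) (μ ν : Measure X) : ℝ≥0∞ :=
  ⨅ (π : Measure (X × X)) (_ : IsCoupling π μ ν), ∫⁻ z, edist z.1 z.2 ^ p ∂π

/-- The `p`-Wasserstein distance, with values in `[0,∞]`. -/
def Wp (p : ℝ) (μ ν : Measure X) : ℝ≥0∞ := Wcost p μ ν ^ (1 / p)

/-- `μ` has finite `p`-th moment. -/
def FiniteMoment (p : ℝ) (μ : Measure X) : Prop :=
  ∃ x₀ : X, ∫⁻ x, edist x x₀ ^ p ∂μ ≠ ∞

end MMS

/-- The distortion coefficient `σ_{K,N}^{(t)}(θ)`, valued in `[0,∞]`. -/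
def sigmaCoef (K N t θ : ℝ) : ℝ≥0∞ :=
  if N * Real.pi ^ 2 ≤ K * θ ^ 2 then ∞
  else if 0 < K * θ ^ 2 then
    ENNReal.ofReal (Real.sin (t * θ * Real.sqrt (K / N)) / Real.sin (θ * Real.sqrt (K / N)))
  else if K * θ ^ 2 = 0 then ENNReal.ofReal t
  else ENNReal.ofReal (Real.sinh (t * θ * Real.sqrt (-K / N)) / Real.sinh (θ * Real.sqrt (-K / N)))

/-- The distortion coefficient `τ_{K,N}^{(t)}(θ) = t^{1/N} · σ_{K,N-1}^{(t)}(θ)^{1-1/N}` (`N > 1`). -/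
def tauCoef (K N t θ : ℝ) : ℝ≥0∞ :=
  ENNReal.ofReal (t ^ (1 / N)) * sigmaCoef K (N - 1) t θ ^ (1 - 1 / N)

section Dyn
variable {X : Type*} [MetricSpace X] [MeasurableSpace X] [MeasurableSpace C(unitInterval, X)]

/-- Evaluation map `e_t`. -/
def eval (t : unitInterval) : C(unitInterval, X) → X := fun γ => γ t

/-- A set of non-branching geodesics. -/
def IsNonBranchingSet (A : Set C(unitInterval, X)) : Prop :=
  ∀ γ₁ ∈ A, ∀ γ₂ ∈ A,
    (∃ tb : ℝ, 0 < tb ∧ tb < 1 ∧ ∀ s : unitInterval, (s : ℝ) ≤ tb → γ₁ s = γ₂ s) → γ₁ = γ₂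

/-- `(X,d,m)` is essentially non-branching: every optimal dynamical plan between absolutely
continuous marginals in `P₂` is concentrated on a set of non-branching geodesics. -/
def EssentiallyNonBranching (m : Measure X) : Prop :=
  ∀ μ0 μ1 : Measure X,
    IsProbabilityMeasure μ0 → IsProbabilityMeasure μ1 → μ0 ≪ m → μ1 ≪ m →
    FiniteMoment 2 μ0 → FiniteMoment 2 μ1 →
    ∀ ν : Measure C(unitInterval, X), IsProbabilityMeasure ν →
      ν {γ | ¬ IsCSG γ} = 0 →
      ν.map (eval 0) = μ0 → ν.map (eval 1) = μ1 →
      (∀ s t : unitInterval,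
        Wp 2 (ν.map (eval s)) (ν.map (eval t))
          = ENNReal.ofReal |(s : ℝ) - (t : ℝ)| * Wp 2 μ0 μ1) →
      (∫⁻ γ, edist (γ 0) (γ 1) ^ (2 : ℝ) ∂ν) = Wcost 2 μ0 μ1 →
      ∃ A : Set C(unitInterval, X), IsNonBranchingSet A ∧ ν Aᶜ = 0

/-- The condition `CD₁(K,N)`: displacement convexity of the Rényi entropies along dynamical
plans concentrated on constant speed geodesics realizing the `W₁`-distance. -/
def CDone (K N : ℝ) (m : Measure X) : Prop :=
  ∀ μ0 μ1 : Measure X,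
    IsProbabilityMeasure μ0 → IsProbabilityMeasure μ1 → μ0 ≪ m → μ1 ≪ m →
    FiniteMoment 1 μ0 → FiniteMoment 1 μ1 →
    ∃ π : Measure C(unitInterval, X), IsProbabilityMeasure π ∧
      π {γ | ¬ IsCSG γ} = 0 ∧
      (∫⁻ γ, edist (γ 0) (γ 1) ∂π) = Wp 1 μ0 μ1 ∧
      π.map (eval 0) = μ0 ∧ π.map (eval 1) = μ1 ∧
      (∀ t : unitInterval, π.map (eval t) ≪ m) ∧
      (∀ t : unitInterval, ∀ N', N ≤ N' →
        ∫⁻ γ, (tauCoef K N' (1 - (t : ℝ)) (dist (γ 0) (γ 1)) * (μ0.rnDeriv m (γ 0)) ^ (-(1 / N'))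
            + tauCoef K N' (t : ℝ) (dist (γ 0) (γ 1)) * (μ1.rnDeriv m (γ 1)) ^ (-(1 / N'))) ∂π
          ≤ ∫⁻ x, ((π.map (eval t)).rnDeriv m x) ^ (1 - 1 / N') ∂m)

end Dyn

open Filter Topology
open scoped NNReal ProbabilityTheory

/-! ### Distortion coefficients -/

lemma sinc_pos_of_lt {a : ℝ} (h1 : |a| < Real.pi) : 0 < Real.sinc a := by
  rcases eq_or_ne a 0 with rfl | ha
  · simp
  rw [Real.sinc_of_ne_zero ha]
  rcases lt_or_gt_of_ne ha with h | h
  · rw [abs_of_neg h] at h1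
    exact div_pos_of_neg_of_neg (Real.sin_neg_of_neg_of_neg_pi_lt h (by linarith)) h
  · rw [abs_of_pos h] at h1
    exact div_pos (Real.sin_pos_of_pos_of_lt_pi h h1) h

/-- For `K > 0`, `σ` in terms of the continuous function `sinc`, which removes the case `θ = 0`. -/
lemma sigmaCoef_of_pos {K N s θ : ℝ} (hN : 0 < N) (hK : 0 < K) (hs : 0 < s) :
    sigmaCoef K N s θ = if Real.pi ≤ |θ * √(K / N)| then ∞ else
      ENNReal.ofReal (s * Real.sinc (s * (θ * √(K / N)))) /
        ENNReal.ofReal (Real.sinc (θ * √(K / N))) := by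
  have hq : 0 < √(K / N) := Real.sqrt_pos.2 (div_pos hK hN)
  have hsq : √(K / N) ^ 2 = K / N := Real.sq_sqrt (div_pos hK hN).le
  have hcond : N * Real.pi ^ 2 ≤ K * θ ^ 2 ↔ Real.pi ≤ |θ * √(K / N)| := by
    have h1 : K * θ ^ 2 = N * (θ * √(K / N)) ^ 2 := by
      rw [mul_pow, hsq]; field_simp
    rw [h1, mul_le_mul_iff_right₀ hN, sq_le_sq, abs_of_pos Real.pi_pos]
  unfold sigmaCoef
  simp only [hcond]
  split_ifs with h1 h2 h3
  · rfl
  · have hθ : θ ≠ 0 := by rintro rfl; simp at h2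
    have ha : θ * √(K / N) ≠ 0 := mul_ne_zero hθ hq.ne'
    push Not at h1
    have hsa : s * (θ * √(K / N)) ≠ 0 := mul_ne_zero hs.ne' ha
    have hpos : 0 < Real.sinc (θ * √(K / N)) := sinc_pos_of_lt h1
    rw [← ENNReal.ofReal_div_of_pos hpos, Real.sinc_of_ne_zero ha, Real.sinc_of_ne_zero hsa]
    congr 1
    rw [mul_assoc s θ]
    field_simp
  · have hθ : θ = 0 := by
      rcases mul_eq_zero.1 h3 with h | h
      · exact absurd h hK.ne'
      · simpa using h
    subst hθ
    simp
  · exact absurd (by positivity : 0 ≤ K * θ ^ 2) (by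
      intro h; exact h3 (le_antisymm (not_lt.1 h2) h))

lemma sinhc_pos (a : ℝ) : 0 < dslope Real.sinh 0 a := by
  rcases eq_or_ne a 0 with rfl | h
  · rw [dslope_same]; simp
  · rw [dslope_of_ne _ h, slope_def_field]
    simp only [Real.sinh_zero, sub_zero]
    rcases lt_or_gt_of_ne h with h | h
    · exact div_pos_of_neg_of_neg (Real.sinh_neg_iff.2 h) h
    · exact div_pos (Real.sinh_pos_iff.2 h) h

lemma sinhc_of_ne {a : ℝ} (h : a ≠ 0) : dslope Real.sinh 0 a = Real.sinh a / a := by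
  rw [dslope_of_ne _ h, slope_def_field]; simp

lemma continuous_sinhc : Continuous (dslope Real.sinh 0) := by
  have := (continuousOn_dslope (f := Real.sinh) (s := univ) (a := 0) univ_mem).2
    ⟨Real.continuous_sinh.continuousOn, Real.differentiable_sinh 0⟩
  simpa [continuousOn_univ] using this

/-- For `K < 0`, `σ` in terms of `dslope Real.sinh 0`, the continuous extension of `sinh a / a`. -/
lemma sigmaCoef_of_neg {K N s θ : ℝ} (hN : 0 < N) (hK : K < 0) (hs : 0 < s) :
    sigmaCoef K N s θ = ENNReal.ofReal (s * dslope Real.sinh 0 (s * (θ * √(-K / N))) /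
        dslope Real.sinh 0 (θ * √(-K / N))) := by
  have hq : 0 < √(-K / N) := Real.sqrt_pos.2 (div_pos (neg_pos.2 hK) hN)
  have hle : K * θ ^ 2 ≤ 0 := mul_nonpos_of_nonpos_of_nonneg hK.le (sq_nonneg _)
  have hpi : 0 < N * Real.pi ^ 2 := by positivity
  unfold sigmaCoef
  rw [if_neg (by linarith), if_neg (by linarith)]
  split_ifs with h3
  · have hθ : θ = 0 := by
      rcases mul_eq_zero.1 h3 with h | h
      · exact absurd h hK.ne
      · simpa using h
    subst hθ
    simp
  · have hθ : θ ≠ 0 := by rintro rfl; simp at h3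
    have ha : θ * √(-K / N) ≠ 0 := mul_ne_zero hθ hq.ne'
    have hsa : s * (θ * √(-K / N)) ≠ 0 := mul_ne_zero hs.ne' ha
    rw [sinhc_of_ne ha, sinhc_of_ne hsa]
    congr 1
    rw [mul_assoc s θ]
    generalize θ * √(-K / N) = a at *
    field_simp

lemma sigmaCoef_pos {K N s : ℝ} (hN : 0 < N) (hs : 0 < s) (hs1 : s < 1) (θ : ℝ) :
    0 < sigmaCoef K N s θ := by
  rcases lt_trichotomy K 0 with hK | rfl | hK
  · rw [sigmaCoef_of_neg hN hK hs, ENNReal.ofReal_pos]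
    exact div_pos (mul_pos hs (sinhc_pos _)) (sinhc_pos _)
  · have : 0 < N * Real.pi ^ 2 := by positivity
    simp [sigmaCoef, not_le.2 this, hs]
  · rw [sigmaCoef_of_pos hN hK hs]
    split_ifs with h
    · simp
    · push Not at h
      refine ENNReal.div_pos ?_ ENNReal.ofReal_ne_top
      rw [Ne, ENNReal.ofReal_eq_zero, not_le]
      refine mul_pos hs (sinc_pos_of_lt ?_)
      rw [abs_mul, abs_of_pos hs]
      nlinarith [abs_nonneg (θ * √(K / N))]

/-- Lower semicontinuity of `σ` in `θ`.  It fails at the critical length when `s = 1`,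
where the coefficient jumps from `1` to `∞`. -/
lemma sigmaCoef_lsc {K N s : ℝ} (hN : 0 < N) (hs : 0 < s) (hs1 : s < 1) :
    LowerSemicontinuous (sigmaCoef K N s) := by
  rcases lt_trichotomy K 0 with hK | rfl | hK
  · have : sigmaCoef K N s = fun θ => ENNReal.ofReal
        (s * dslope Real.sinh 0 (s * (θ * √(-K / N))) / dslope Real.sinh 0 (θ * √(-K / N))) :=
      funext fun θ => sigmaCoef_of_neg hN hK hs
    rw [this]
    refine Continuous.lowerSemicontinuous (ENNReal.continuous_ofReal.comp ?_)
    refine Continuous.div ?_ ?_ (fun θ => (sinhc_pos _).ne')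
    · exact continuous_const.mul (continuous_sinhc.comp (by fun_prop))
    · exact continuous_sinhc.comp (by fun_prop)
  · have : 0 < N * Real.pi ^ 2 := by positivity
    have : sigmaCoef 0 N s = fun _ => ENNReal.ofReal s := by
      funext θ; simp [sigmaCoef, not_le.2 this]
    rw [this]
    exact continuous_const.lowerSemicontinuous
  · set F : ℝ → ℝ≥0∞ := fun θ => ENNReal.ofReal (s * Real.sinc (s * (θ * √(K / N)))) /
        ENNReal.ofReal (Real.sinc (θ * √(K / N))) with hF
    have hsig : ∀ θ, sigmaCoef K N s θ = if Real.pi ≤ |θ * √(K / N)| then ∞ else F θ :=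
      fun θ => sigmaCoef_of_pos hN hK hs
    have hFle : ∀ θ, F θ ≤ sigmaCoef K N s θ := by
      intro θ; rw [hsig]; split_ifs <;> simp
    intro θ
    rcases lt_or_ge Real.pi |θ * √(K / N)| with h | h
    · have : ∀ᶠ θ' in 𝓝 θ, Real.pi < |θ' * √(K / N)| :=
        (by fun_prop : Continuous fun θ' : ℝ => |θ' * √(K / N)|).continuousAt.eventually
          (lt_mem_nhds h)
      intro b hb
      filter_upwards [this] with θ' h'
      rw [hsig, if_pos h'.le]
      exact lt_of_lt_of_le hb le_top
    · have hnum : 0 < s * Real.sinc (s * (θ * √(K / N))) := by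
        refine mul_pos hs (sinc_pos_of_lt ?_)
        rw [abs_mul, abs_of_pos hs]
        nlinarith [abs_nonneg (θ * √(K / N)), Real.pi_pos]
      have hnum' : ENNReal.ofReal (s * Real.sinc (s * (θ * √(K / N)))) ≠ 0 := by
        simpa [ENNReal.ofReal_eq_zero, not_le] using hnum
      have hcont : ContinuousAt F θ := by
        refine ENNReal.Tendsto.div ?_ (Or.inl hnum') ?_ (Or.inr ENNReal.ofReal_ne_top)
        · exact (ENNReal.continuous_ofReal.comp (continuous_const.mul
            (Real.continuous_sinc.comp (by fun_prop)))).continuousAt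
        · exact (ENNReal.continuous_ofReal.comp
            (Real.continuous_sinc.comp (by fun_prop))).continuousAt
      have heq : sigmaCoef K N s θ = F θ := by
        rw [hsig]
        split_ifs with h'
        · have habs := le_antisymm h h'
          have hs0 : Real.sinc (θ * √(K / N)) = 0 := by
            have hne : θ * √(K / N) ≠ 0 := by
              intro h0; rw [h0, abs_zero] at habs; exact Real.pi_pos.ne habs
            rw [Real.sinc_of_ne_zero hne]
            rcases abs_choice (θ * √(K / N)) with hc | hc
            · rw [← hc, habs]; simp
            · rw [show θ * √(K / N) = -Real.pi by linarith]; simp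
          simp only [hF]
          rw [hs0, ENNReal.ofReal_zero, ENNReal.div_zero hnum']
        · rfl
      intro b hb
      rw [heq] at hb
      filter_upwards [hcont.eventually (lt_mem_nhds hb)] with θ' h'
      exact lt_of_lt_of_le h' (hFle θ')

lemma tauCoef_pos {K N s : ℝ} (hN : 1 < N) (hs : 0 < s) (hs1 : s < 1) (θ : ℝ) :
    0 < tauCoef K N s θ := by
  unfold tauCoef
  have h1 : 0 < ENNReal.ofReal (s ^ (1 / N)) := by
    rw [ENNReal.ofReal_pos]; positivity
  have h2 := sigmaCoef_pos (K := K) (sub_pos.2 hN) hs hs1 θ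
  have hexp : 0 < 1 - 1 / N := by
    rw [sub_pos, div_lt_one (by linarith)]; exact hN
  exact ENNReal.mul_pos h1.ne' (ENNReal.rpow_pos_of_nonneg h2 hexp.le).ne'

lemma tauCoef_lsc {K N s : ℝ} (hN : 1 < N) (hs : 0 < s) (hs1 : s < 1) :
    LowerSemicontinuous (tauCoef K N s) := by
  have hexp : 0 < 1 - 1 / N := by
    rw [sub_pos, div_lt_one (by linarith)]; exact hN
  have hmono : Monotone fun x : ℝ≥0∞ => ENNReal.ofReal (s ^ (1 / N)) * x ^ (1 - 1 / N) :=
    fun a b h => mul_le_mul_right (ENNReal.rpow_le_rpow h hexp.le) _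
  have hcont : Continuous fun x : ℝ≥0∞ => ENNReal.ofReal (s ^ (1 / N)) * x ^ (1 - 1 / N) :=
    (ENNReal.continuous_const_mul ENNReal.ofReal_ne_top).comp ENNReal.continuous_rpow_const
  exact hcont.comp_lowerSemicontinuous (sigmaCoef_lsc (sub_pos.2 hN) hs hs1) hmono

lemma tauCoef_exists_lower_bound {K N s : ℝ} (hN : 1 < N) (hs : 0 < s) (hs1 : s < 1) {R : ℝ}
    (hR : 0 ≤ R) : ∃ c : ℝ≥0∞, 0 < c ∧ ∀ θ, 0 ≤ θ → θ ≤ R → c ≤ tauCoef K N s θ := by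
  obtain ⟨θ₀, -, h⟩ := (tauCoef_lsc (K := K) hN hs hs1).lowerSemicontinuousOn (Icc 0 R)
    |>.exists_isMinOn (nonempty_Icc.2 hR) isCompact_Icc
  exact ⟨_, tauCoef_pos hN hs hs1 θ₀, fun θ h0 h1 => h ⟨h0, h1⟩⟩

/-- The coefficient at time `1` is at most `1` where the coefficient at an interior time is finite. -/
lemma tauCoef_one_of_ne_top {K N s θ : ℝ} (hN : 1 < N) (hs : 0 < s)
    (h : tauCoef K N s θ ≠ ∞) : tauCoef K N 1 θ ≤ 1 := by
  have hN' : 0 < N - 1 := sub_pos.2 hN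
  have hexp : 0 < 1 - 1 / N := by
    rw [sub_pos, div_lt_one (by linarith)]; exact hN
  have hlt : ¬ (N - 1) * Real.pi ^ 2 ≤ K * θ ^ 2 := by
    intro hle
    apply h
    have : 0 < s ^ (1 / N) := by positivity
    rw [tauCoef, sigmaCoef, if_pos hle, ENNReal.top_rpow_of_pos hexp]
    exact ENNReal.mul_top (by simpa [ENNReal.ofReal_eq_zero, not_le] using this)
  have hsig : sigmaCoef K (N - 1) 1 θ ≤ 1 := by
    unfold sigmaCoef
    rw [if_neg hlt]
    simp only [one_mul]
    split_ifs
    · exact ENNReal.ofReal_le_one.2 (div_self_le_one _)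
    · simp
    · exact ENNReal.ofReal_le_one.2 (div_self_le_one _)
  unfold tauCoef
  simpa using ENNReal.rpow_le_one hsig hexp.le

/-! ### Tangent bounds and upper semicontinuity of the entropy -/

/-- Constant term `(1 - α) s ^ α` of the tangent line of `r ↦ r ^ α` at `s`. -/
def tanConst (α : ℝ) (s : ℝ≥0) : ℝ≥0 := Real.toNNReal (1 - α) * s ^ α

/-- Slope `α s ^ (α - 1)` of the tangent line of `r ↦ r ^ α` at `s`. -/
def tanSlope (α : ℝ) (s : ℝ≥0) : ℝ≥0 := Real.toNNReal α * s ^ (α - 1)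

lemma rpow_le_tangent {α : ℝ} (h0 : 0 < α) (h1 : α < 1) {s : ℝ≥0} (hs : 0 < s) (r : ℝ≥0∞) :
    r ^ α ≤ tanConst α s + tanSlope α s * r := by
  have hB : 0 < tanSlope α s :=
    mul_pos (Real.toNNReal_pos.2 h0) (NNReal.rpow_pos hs)
  induction r with
  | top => simp [ENNReal.mul_top, hB.ne']
  | coe r =>
    rw [← ENNReal.coe_rpow_of_nonneg _ h0.le]
    norm_cast
    have hw : Real.toNNReal (1 - α) + Real.toNNReal α = 1 := by
      rw [← Real.toNNReal_add (by linarith) h0.le]; simp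
    have key := NNReal.geom_mean_le_arith_mean2_weighted (Real.toNNReal (1 - α))
      (Real.toNNReal α) (s ^ α) (s ^ (α - 1) * r) hw
    rw [Real.coe_toNNReal _ (by linarith), Real.coe_toNNReal _ h0.le, NNReal.mul_rpow,
      ← NNReal.rpow_mul, ← NNReal.rpow_mul, ← mul_assoc, ← NNReal.rpow_add hs.ne'] at key
    rw [show α * (1 - α) + (α - 1) * α = 0 by ring, NNReal.rpow_zero, one_mul] at key
    simpa [tanConst, tanSlope, mul_assoc] using key

lemma tanConst_add_tanSlope {α : ℝ} (h0 : 0 < α) (h1 : α < 1) (r : ℝ≥0) :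
    tanConst α r + tanSlope α r * r = r ^ α := by
  unfold tanConst tanSlope
  have hw : Real.toNNReal (1 - α) + Real.toNNReal α = 1 := by
    rw [← Real.toNNReal_add (by linarith) h0.le]; simp
  rcases eq_or_ne r 0 with rfl | hr
  · simp [NNReal.zero_rpow h0.ne']
  · have : r ^ (α - 1) * r = r ^ α := by
      nth_rewrite 2 [← NNReal.rpow_one r]
      rw [← NNReal.rpow_add hr]; simp
    rw [mul_assoc, this, ← add_mul, hw, one_mul]

lemma continuous_tanConst {α : ℝ} (h0 : 0 < α) : Continuous (tanConst α) :=
  continuous_const.mul (NNReal.continuous_rpow_const h0.le)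

lemma continuousAt_tanSlope {α : ℝ} {s : ℝ≥0} (hs : 0 < s) : ContinuousAt (tanSlope α) s :=
  continuousAt_const.mul (NNReal.continuousAt_rpow_const (Or.inl hs.ne'))

lemma measurable_tanSlope {α : ℝ} : Measurable (tanSlope α) := by
  unfold tanSlope; fun_prop

lemma tanConst_le {α : ℝ} (h0 : 0 < α) {s M : ℝ≥0} (h : s ≤ M) :
    tanConst α s ≤ tanConst α M :=
  mul_le_mul_right (NNReal.rpow_le_rpow h h0.le) _

lemma tanSlope_le {α : ℝ} (h1 : α < 1) {s δ : ℝ≥0} (hδ : 0 < δ) (h : δ ≤ s) :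
    tanSlope α s ≤ tanSlope α δ :=
  mul_le_mul_right (NNReal.rpow_le_rpow_of_nonpos hδ h (by linarith)) _

lemma tanConst_le_add_one {α : ℝ} (h0 : 0 < α) (h1 : α < 1) (s : ℝ≥0) :
    tanConst α s ≤ s + 1 := by
  calc tanConst α s ≤ 1 * (s + 1) ^ (1 : ℝ) := by
        refine mul_le_mul' (Real.toNNReal_le_one.2 (by linarith)) ?_
        refine (NNReal.rpow_le_rpow (le_add_of_nonneg_right zero_le_one) h0.le).trans ?_
        exact NNReal.rpow_le_rpow_of_exponent_le (by simp) h1.le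
    _ = s + 1 := by simp

lemma tanSlope_one_le {α : ℝ} (h1 : α < 1) : tanSlope α 1 ≤ 1 := by
  simp [tanSlope, h1.le]

section Entropy
variable {X : Type*} [MeasurableSpace X]

/-- The affine upper bound for the entropy `∫ ρ ^ α dm` of `ν` obtained by replacing `r ↦ r ^ α`
by its tangent line at `s x`. -/
def tanBound (α : ℝ) (m ν : Measure X) (s : X → ℝ≥0) : ℝ≥0∞ :=
  ∫⁻ x, tanConst α (s x) ∂m + ∫⁻ x, tanSlope α (s x) ∂ν

lemma entropy_le_tanBound {α : ℝ} (h0 : 0 < α) (h1 : α < 1) (m ν : Measure X)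
    {s : X → ℝ≥0} (hs : Measurable s) (hpos : ∀ x, 0 < s x) :
    ∫⁻ x, (ν.rnDeriv m x) ^ α ∂m ≤ tanBound α m ν s := by
  have hA : Measurable fun x => (tanConst α (s x) : ℝ≥0∞) :=
    ((continuous_tanConst h0).measurable.comp hs).coe_nnreal_ennreal
  have hB : Measurable fun x => (tanSlope α (s x) : ℝ≥0∞) :=
    (measurable_tanSlope.comp hs).coe_nnreal_ennreal
  calc ∫⁻ x, (ν.rnDeriv m x) ^ α ∂m
      ≤ ∫⁻ x, (tanConst α (s x) + tanSlope α (s x) * ν.rnDeriv m x) ∂m :=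
        lintegral_mono fun x => rpow_le_tangent h0 h1 (hpos x) _
    _ = ∫⁻ x, tanConst α (s x) ∂m + ∫⁻ x, ν.rnDeriv m x * tanSlope α (s x) ∂m := by
        rw [lintegral_add_left hA]; simp_rw [mul_comm]
    _ = ∫⁻ x, tanConst α (s x) ∂m + ∫⁻ x, tanSlope α (s x) ∂(m.withDensity (ν.rnDeriv m)) := by
        rw [lintegral_withDensity_eq_lintegral_mul _ (Measure.measurable_rnDeriv _ _) hB]; rfl
    _ ≤ tanBound α m ν s :=
        add_le_add_right (lintegral_mono' (Measure.withDensity_rnDeriv_le _ _) le_rfl) _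

lemma entropy_le_one {α : ℝ} (h0 : 0 < α) (h1 : α < 1) (m ν : Measure X)
    [IsProbabilityMeasure m] [IsProbabilityMeasure ν] :
    ∫⁻ x, (ν.rnDeriv m x) ^ α ∂m ≤ 1 := by
  refine (entropy_le_tanBound h0 h1 m ν (s := fun _ => 1) measurable_const (by simp)).trans ?_
  have := tanConst_add_tanSlope h0 h1 1
  rw [mul_one, NNReal.one_rpow] at this
  simp only [tanBound, lintegral_const, measure_univ, mul_one]
  exact_mod_cast this.le

/-- Measurable tangency functions, bounded away from `0` and `∞`, for which the tangent bound is
almost sharp: truncations of the density of `ν`, taken large on the set carrying the singular part,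
where they make the slope small. -/
lemma exists_measurable_tanBound_lt {α : ℝ} (h0 : 0 < α) (h1 : α < 1) (m ν : Measure X)
    [IsProbabilityMeasure m] [IsProbabilityMeasure ν] {ε : ℝ≥0∞} (hε : 0 < ε) :
    ∃ (s : X → ℝ≥0) (δ M : ℝ≥0), Measurable s ∧ 0 < δ ∧ (∀ x, δ ≤ s x) ∧ (∀ x, s x ≤ M) ∧
      tanBound α m ν s < ∫⁻ x, (ν.rnDeriv m x) ^ α ∂m + ε := by
  classical
  set ρ : X → ℝ≥0 := fun x => (ν.rnDeriv m x).toNNReal with hρ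
  have hρm : Measurable ρ := (Measure.measurable_rnDeriv _ _).ennreal_toNNReal
  have hρe : ∀ᵐ x ∂m, (ρ x : ℝ≥0∞) = ν.rnDeriv m x := by
    filter_upwards [Measure.rnDeriv_lt_top ν m] with x hx
    exact ENNReal.coe_toNNReal hx.ne
  have hsing := Measure.mutuallySingular_singularPart ν m
  set S := hsing.nullSet with hS
  have hSm : MeasurableSet S := hsing.measurableSet_nullSet
  have hS1 : ∀ᵐ x ∂(ν.singularPart m), x ∉ S := by
    rw [ae_iff]; simp only [not_not]; exact hsing.measure_nullSet
  have hS2 : ∀ᵐ x ∂m, x ∈ S := by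
    rw [ae_iff]; exact hsing.measure_compl_nullSet
  set s : ℕ → X → ℝ≥0 := fun k x =>
    if x ∈ S then min (ρ x) (k + 1) + 1 / ((k : ℝ≥0) + 1) else k + 1 with hs
  have hsm : ∀ k, Measurable (s k) := fun k =>
    Measurable.ite hSm ((hρm.min measurable_const).add measurable_const) measurable_const
  have hAm : ∀ k, Measurable fun x => (tanConst α (s k x) : ℝ≥0∞) := fun k =>
    ((continuous_tanConst h0).measurable.comp (hsm k)).coe_nnreal_ennreal
  have hBm : ∀ k, Measurable fun x => (tanSlope α (s k x) : ℝ≥0∞) := fun k =>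
    (measurable_tanSlope.comp (hsm k)).coe_nnreal_ennreal
  have hρint : ∫⁻ x, ((ρ x + 1 : ℝ≥0) : ℝ≥0∞) ∂m ≠ ∞ := by
    have : ∫⁻ x, ((ρ x + 1 : ℝ≥0) : ℝ≥0∞) ∂m = ∫⁻ x, ν.rnDeriv m x ∂m + 1 := by
      simp only [ENNReal.coe_add, ENNReal.coe_one]
      rw [lintegral_add_right _ measurable_const, lintegral_congr_ae hρe]
      simp
    rw [this]
    exact ENNReal.add_ne_top.2 ⟨(Measure.lintegral_rnDeriv_lt_top ν m).ne, by simp⟩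
  have hlim : ∀ x ∈ S, Tendsto (fun k => s k x) atTop (𝓝 (ρ x)) := by
    intro x hx
    simp only [hs, if_pos hx]
    have hinv : Tendsto (fun k : ℕ => 1 / ((k : ℝ≥0) + 1)) atTop (𝓝 0) :=
      tendsto_one_div_add_atTop_nhds_zero_nat
    have hmin : Tendsto (fun k : ℕ => min (ρ x) ((k : ℝ≥0) + 1)) atTop (𝓝 (ρ x)) := by
      refine tendsto_const_nhds.congr' ?_
      obtain ⟨n, hn⟩ := exists_nat_ge (ρ x)
      filter_upwards [eventually_ge_atTop n] with k hk
      have : (n : ℝ≥0) ≤ k := by exact_mod_cast hk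
      exact (min_eq_left (hn.trans (this.trans (by simp)))).symm
    simpa using hmin.add hinv
  have hT1 : Tendsto (fun k => ∫⁻ x, tanConst α (s k x) ∂m) atTop
      (𝓝 (∫⁻ x, tanConst α (ρ x) ∂m)) := by
    refine tendsto_lintegral_of_dominated_convergence
      (fun x => ((ρ x + 1 : ℝ≥0) : ℝ≥0∞) + 1) hAm (fun k => ?_) ?_ ?_
    · filter_upwards [hS2] with x hx
      have h2 : s k x ≤ ρ x + 1 := by
        simp only [hs, if_pos hx]
        refine add_le_add (min_le_left _ _) ?_
        rw [div_le_one (by positivity)]; simp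
      exact_mod_cast (tanConst_le_add_one h0 h1 _).trans (add_le_add_left h2 1)
    · rw [lintegral_add_right _ measurable_const]
      simpa using hρint
    · filter_upwards [hS2] with x hx
      exact ENNReal.tendsto_coe.2 ((continuous_tanConst h0).continuousAt.tendsto.comp (hlim x hx))
  have hT2 : Tendsto (fun k => ∫⁻ x, ((tanSlope α (s k x) * ρ x : ℝ≥0) : ℝ≥0∞) ∂m) atTop
      (𝓝 (∫⁻ x, ((tanSlope α (ρ x) * ρ x : ℝ≥0) : ℝ≥0∞) ∂m)) := by
    refine tendsto_lintegral_of_dominated_convergence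
      (fun x => ((ρ x + 1 : ℝ≥0) : ℝ≥0∞)) (fun k => ?_) (fun k => ?_) hρint ?_
    · exact ((measurable_tanSlope.comp (hsm k)).mul hρm).coe_nnreal_ennreal
    · filter_upwards [hS2] with x hx
      norm_cast
      rcases le_total 1 (ρ x) with h | h
      · have h2 : 1 ≤ s k x := by
          simp only [hs, if_pos hx]
          exact le_add_of_le_of_nonneg (le_min h (by simp)) zero_le
        calc tanSlope α (s k x) * ρ x ≤ 1 * ρ x :=
              mul_le_mul_left ((tanSlope_le h1 one_pos h2).trans (tanSlope_one_le h1)) _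
          _ ≤ ρ x + 1 := by simp
      · rcases eq_or_ne (ρ x) 0 with h3 | h3
        · simp [h3]
        have h2 : ρ x ≤ s k x := by
          simp only [hs, if_pos hx]
          exact le_add_of_le_of_nonneg (le_min le_rfl (h.trans (by simp))) zero_le
        calc tanSlope α (s k x) * ρ x ≤ tanSlope α (ρ x) * ρ x :=
              mul_le_mul_left (tanSlope_le h1 (pos_iff_ne_zero.2 h3) h2) _
          _ ≤ ρ x ^ α := by rw [← tanConst_add_tanSlope h0 h1]; simp
          _ ≤ 1 := NNReal.rpow_le_one h h0.le
          _ ≤ ρ x + 1 := by simp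
    · filter_upwards [hS2] with x hx
      refine ENNReal.tendsto_coe.2 ?_
      rcases eq_or_ne (ρ x) 0 with h3 | h3
      · simp [h3]
      · exact (((continuousAt_tanSlope (pos_iff_ne_zero.2 h3)).tendsto).comp (hlim x hx)).mul_const _
  have hT3 : Tendsto (fun k => ∫⁻ x, tanSlope α (s k x) ∂(ν.singularPart m)) atTop (𝓝 0) := by
    have : Tendsto (fun k => ∫⁻ x, tanSlope α (s k x) ∂(ν.singularPart m)) atTop
        (𝓝 (∫⁻ x, 0 ∂(ν.singularPart m))) := by
      refine tendsto_lintegral_of_dominated_convergence (fun x => 1) hBm (fun k => ?_) (by simp) ?_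
      · filter_upwards [hS1] with x hx
        simp only [hs, if_neg hx]
        exact_mod_cast (tanSlope_le h1 one_pos (by simp)).trans (tanSlope_one_le h1)
      · filter_upwards [hS1] with x hx
        simp only [hs, if_neg hx]
        rw [← ENNReal.coe_zero]
        refine ENNReal.tendsto_coe.2 ?_
        have h3 : Tendsto (fun k : ℕ => ((k : ℝ) + 1) ^ (-(1 - α))) atTop (𝓝 0) :=
          (tendsto_rpow_neg_atTop (by linarith)).comp
            (tendsto_atTop_add_const_right _ _ tendsto_natCast_atTop_atTop)
        have h4 : Tendsto (fun k : ℕ => ((k : ℝ≥0) + 1) ^ (α - 1)) atTop (𝓝 0) := by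
          rw [← NNReal.tendsto_coe]
          simpa using h3
        simpa [tanSlope] using h4.const_mul (Real.toNNReal α)
    simpa using this
  have hsplit : ∀ k, tanBound α m ν (s k) = ∫⁻ x, tanConst α (s k x) ∂m +
      (∫⁻ x, tanSlope α (s k x) ∂(ν.singularPart m) +
        ∫⁻ x, ((tanSlope α (s k x) * ρ x : ℝ≥0) : ℝ≥0∞) ∂m) := by
    intro k
    unfold tanBound
    congr 1
    conv_lhs => rw [ν.haveLebesgueDecomposition_add m]
    rw [lintegral_add_measure,
      lintegral_withDensity_eq_lintegral_mul _ (Measure.measurable_rnDeriv _ _) (hBm k)]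
    congr 1
    refine lintegral_congr_ae ?_
    filter_upwards [hρe] with x hx
    rw [Pi.mul_apply, ENNReal.coe_mul, hx, mul_comm]
  have hfin : ∫⁻ x, (ν.rnDeriv m x) ^ α ∂m ≠ ∞ :=
    ((entropy_le_one h0 h1 m ν).trans_lt ENNReal.one_lt_top).ne
  have hT : Tendsto (fun k => tanBound α m ν (s k)) atTop
      (𝓝 (∫⁻ x, (ν.rnDeriv m x) ^ α ∂m)) := by
    have heq : ∫⁻ x, (ν.rnDeriv m x) ^ α ∂m = ∫⁻ x, tanConst α (ρ x) ∂m +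
        (0 + ∫⁻ x, ((tanSlope α (ρ x) * ρ x : ℝ≥0) : ℝ≥0∞) ∂m) := by
      have hm : Measurable fun x => (tanConst α (ρ x) : ℝ≥0∞) :=
        ((continuous_tanConst h0).measurable.comp hρm).coe_nnreal_ennreal
      rw [zero_add, ← lintegral_add_left hm]
      refine lintegral_congr_ae ?_
      filter_upwards [hρe] with x hx
      rw [← hx, ← ENNReal.coe_rpow_of_nonneg _ h0.le, ← tanConst_add_tanSlope h0 h1,
        ENNReal.coe_add]
    rw [heq]
    simp_rw [hsplit]
    exact hT1.add (hT3.add hT2)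
  obtain ⟨k, hk⟩ := (hT.eventually (gt_mem_nhds
    (ENNReal.lt_add_right hfin hε.ne'))).exists
  refine ⟨s k, 1 / ((k : ℝ≥0) + 1), k + 2, hsm k, by positivity, fun x => ?_, fun x => ?_, hk⟩
  · simp only [hs]
    split_ifs
    · simp
    · exact (div_le_one (by positivity) |>.2 (by simp)).trans (by simp : (1 : ℝ≥0) ≤ k + 1)
  · simp only [hs]
    have : (1 : ℝ≥0) / ((k : ℝ≥0) + 1) ≤ 1 := (div_le_one (by positivity)).2 (by simp)
    split_ifs
    · calc _ ≤ ((k : ℝ≥0) + 1) + 1 := add_le_add (min_le_right _ _) this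
        _ = k + 2 := by ring
    · gcongr; norm_num

variable [MetricSpace X] [BorelSpace X]

/-- The tangent bound of a measurable tangency function bounded away from `0` and `∞` is attained up
to any error by a continuous one. -/
lemma exists_continuous_tanBound_lt {α : ℝ} (h0 : 0 < α) (h1 : α < 1) (m ν : Measure X)
    [IsProbabilityMeasure m] [IsProbabilityMeasure ν] {s : X → ℝ≥0} {δ M : ℝ≥0}
    (hs : Measurable s) (hδ : 0 < δ) (hδs : ∀ x, δ ≤ s x) (hsM : ∀ x, s x ≤ M)
    {c : ℝ≥0∞} (hc : tanBound α m ν s < c) :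
    ∃ g : X → ℝ≥0, Continuous g ∧ (∀ x, δ ≤ g x) ∧ (∀ x, g x ≤ M) ∧ tanBound α m ν g < c := by
  have hmemLp : MemLp (fun x => (s x : ℝ)) 1 (m + ν) := by
    refine MemLp.of_bound (C := M) hs.coe_nnreal_real.aestronglyMeasurable ?_
    exact Eventually.of_forall fun x => by simpa using hsM x
  have happ : ∀ n : ℕ, ∃ g : X → ℝ, Continuous g ∧ AEStronglyMeasurable g (m + ν) ∧
      eLpNorm (g - fun x => (s x : ℝ)) 1 (m + ν) ≤ ((n : ℝ≥0∞) + 1)⁻¹ := by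
    intro n
    obtain ⟨g, hg, hg'⟩ := hmemLp.exists_boundedContinuous_eLpNorm_sub_le ENNReal.one_ne_top
      (ε := ((n : ℝ≥0∞) + 1)⁻¹) (by simp)
    exact ⟨g, g.continuous, hg'.1, by rwa [eLpNorm_sub_comm]⟩
  choose g hgc hgm hg using happ
  have htend : TendstoInMeasure (m + ν) g atTop (fun x => (s x : ℝ)) := by
    refine tendstoInMeasure_of_tendsto_eLpNorm one_ne_zero hgm hmemLp.1 ?_
    refine tendsto_of_tendsto_of_tendsto_of_le_of_le tendsto_const_nhds ?_
      (fun _ => zero_le) hg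
    have : Tendsto (fun n : ℕ => ((n + 1 : ℕ) : ℝ≥0∞)⁻¹) atTop (𝓝 0) :=
      ENNReal.tendsto_inv_nat_nhds_zero.comp (tendsto_add_atTop_nat 1)
    simpa using this
  obtain ⟨ns, -, hns⟩ := htend.exists_seq_tendsto_ae
  set G : ℕ → X → ℝ≥0 := fun i x => max δ (min (Real.toNNReal (g (ns i) x)) M) with hG
  have hδM : ∀ x : X, δ ≤ M := fun x => (hδs x).trans (hsM x)
  have hGc : ∀ i, Continuous (G i) := fun i =>
    continuous_const.max ((continuous_real_toNNReal.comp (hgc _)).min continuous_const)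
  have hGδ : ∀ i x, δ ≤ G i x := fun i x => le_max_left _ _
  have hGM : ∀ i x, G i x ≤ M := fun i x => max_le (hδM x) (min_le_right _ _)
  have hGlim : ∀ᵐ x ∂(m + ν), Tendsto (fun i => G i x) atTop (𝓝 (s x)) := by
    filter_upwards [hns] with x hx
    have h2 : s x = max δ (min (Real.toNNReal (s x : ℝ)) M) := by
      rw [Real.toNNReal_coe, min_eq_left (hsM x), max_eq_right (hδs x)]
    rw [h2]
    exact tendsto_const_nhds.max (((continuous_real_toNNReal.tendsto _).comp hx).min
      tendsto_const_nhds)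
  rw [ae_add_measure_iff] at hGlim
  have hT : Tendsto (fun i => tanBound α m ν (G i)) atTop (𝓝 (tanBound α m ν s)) := by
    refine Tendsto.add ?_ ?_
    · refine tendsto_lintegral_of_dominated_convergence (fun _ => (tanConst α M : ℝ≥0∞))
        (fun i => ?_) (fun i => ?_) (by simp) ?_
      · exact ((continuous_tanConst h0).comp (hGc i)).measurable.coe_nnreal_ennreal
      · exact Eventually.of_forall fun x => ENNReal.coe_le_coe.2 (tanConst_le h0 (hGM i x))
      · filter_upwards [hGlim.1] with x hx
        exact ENNReal.tendsto_coe.2 ((continuous_tanConst h0).continuousAt.tendsto.comp hx)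
    · refine tendsto_lintegral_of_dominated_convergence (fun _ => (tanSlope α δ : ℝ≥0∞))
        (fun i => ?_) (fun i => ?_) (by simp) ?_
      · exact (measurable_tanSlope.comp (hGc i).measurable).coe_nnreal_ennreal
      · exact Eventually.of_forall fun x => ENNReal.coe_le_coe.2 (tanSlope_le h1 hδ (hGδ i x))
      · filter_upwards [hGlim.2] with x hx
        exact ENNReal.tendsto_coe.2
          ((continuousAt_tanSlope (hδ.trans_le (hδs x))).tendsto.comp hx)
  obtain ⟨i, hi⟩ := (hT.eventually (gt_mem_nhds hc)).exists
  exact ⟨G i, hGc i, hGδ i, hGM i, hi⟩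

/-- Upper semicontinuity of the entropy `∫ ρ ^ α dm` under weak convergence: each tangent bound
with a continuous tangency function passes to the limit. -/
lemma entropy_usc {α : ℝ} (h0 : 0 < α) (h1 : α < 1) (m : Measure X) [IsProbabilityMeasure m]
    {ι : Type*} {L : Filter ι} [L.NeBot] {νs : ι → ProbabilityMeasure X} {ν : ProbabilityMeasure X}
    (hlim : Tendsto νs L (𝓝 ν)) {c : ℝ≥0∞}
    (hc : ∀ᶠ i in L, c ≤ ∫⁻ x, ((νs i : Measure X).rnDeriv m x) ^ α ∂m) :
    c ≤ ∫⁻ x, ((ν : Measure X).rnDeriv m x) ^ α ∂m := by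
  refine _root_.le_of_forall_pos_le_add fun ε hε => ?_
  obtain ⟨s, δ, M, hsm, hδ, hδs, hsM, hlt⟩ :=
    exists_measurable_tanBound_lt h0 h1 m (ν : Measure X) hε
  obtain ⟨g, hgc, hgδ, hgM, hg⟩ :=
    exists_continuous_tanBound_lt h0 h1 m (ν : Measure X) hsm hδ hδs hsM hlt
  have hBc : Continuous fun x => tanSlope α (g x) :=
    continuous_iff_continuousAt.2 fun x =>
      (continuousAt_tanSlope (hδ.trans_le (hgδ x))).comp hgc.continuousAt
  let f : BoundedContinuousFunction X ℝ≥0 :=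
    BoundedContinuousFunction.mkOfBound ⟨_, hBc⟩ (tanSlope α δ) (by
      intro x y
      have hx : (tanSlope α (g x) : ℝ) ≤ tanSlope α δ := tanSlope_le h1 hδ (hgδ x)
      have hy : (tanSlope α (g y) : ℝ) ≤ tanSlope α δ := tanSlope_le h1 hδ (hgδ y)
      rw [NNReal.dist_eq, abs_le]
      have hx0 := (tanSlope α (g x)).coe_nonneg
      have hy0 := (tanSlope α (g y)).coe_nonneg
      constructor <;> simp only [ContinuousMap.coe_mk] <;> linarith)
  have hconv := (ProbabilityMeasure.tendsto_iff_forall_lintegral_tendsto.1 hlim) f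
  refine le_trans ?_ hg.le
  refine ge_of_tendsto (hconv.const_add (∫⁻ x, tanConst α (g x) ∂m)) ?_
  filter_upwards [hc] with i hi
  exact hi.trans (entropy_le_tanBound h0 h1 m _ hgc.measurable fun x => hδ.trans_le (hgδ x))

end Entropy

/-! ### Contraction towards balls, doubling and properness -/

section Doubling
variable {X : Type*} [MeasurableSpace X]

/-- Jensen's inequality for the entropy of a measure concentrated on `B`. -/
lemma entropy_le_measure_rpow {α : ℝ} (h0 : 0 < α) (h1 : α < 1) (m ν : Measure X)
    [IsProbabilityMeasure m] [IsProbabilityMeasure ν] {B : Set X} (hB : MeasurableSet B)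
    (hν : ν Bᶜ = 0) :
    ∫⁻ x, (ν.rnDeriv m x) ^ α ∂m ≤ m B ^ (1 - α) := by
  have hρm := Measure.measurable_rnDeriv ν m
  have hzero : ∀ᵐ x ∂m, x ∈ Bᶜ → ν.rnDeriv m x = 0 := by
    have : ∫⁻ x in Bᶜ, ν.rnDeriv m x ∂m = 0 :=
      le_antisymm ((Measure.setLIntegral_rnDeriv_le _).trans hν.le) zero_le
    rw [lintegral_eq_zero_iff hρm] at this
    exact (ae_restrict_iff' hB.compl).1 this
  have hconj : (1 / α).HolderConjugate (1 / (1 - α)) := by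
    refine ⟨?_, ?_, ?_⟩
    · simp
    · positivity
    · have : 0 < 1 - α := by linarith
      positivity
  have hH := ENNReal.lintegral_mul_le_Lp_mul_Lq m hconj
    (hρm.pow_const α).aemeasurable ((measurable_const.indicator hB).aemeasurable
      (f := B.indicator (fun _ => (1 : ℝ≥0∞))))
  have hα1 : 0 < 1 - α := by linarith
  calc ∫⁻ x, (ν.rnDeriv m x) ^ α ∂m
      = ∫⁻ x, ((fun x => (ν.rnDeriv m x) ^ α) * B.indicator (fun _ => (1 : ℝ≥0∞))) x ∂m := by
        refine lintegral_congr_ae ?_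
        filter_upwards [hzero] with x hx
        by_cases hxB : x ∈ B
        · simp [hxB]
        · simp [hxB, hx hxB, ENNReal.zero_rpow_of_pos h0]
    _ ≤ _ := hH
    _ ≤ 1 * m B ^ (1 - α) := by
        refine mul_le_mul' ?_ ?_
        · have : ∀ x, ((ν.rnDeriv m x) ^ α) ^ (1 / α) = ν.rnDeriv m x := fun x => by
            rw [← ENNReal.rpow_mul, mul_one_div_cancel h0.ne', ENNReal.rpow_one]
          simp_rw [this]
          refine ENNReal.rpow_le_one ?_ (by positivity)
          exact Measure.lintegral_rnDeriv_le.trans prob_le_one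
        · have : ∀ x, (B.indicator (fun _ => (1 : ℝ≥0∞)) x) ^ (1 / (1 - α)) =
              B.indicator (fun _ => (1 : ℝ≥0∞)) x := fun x => by
            by_cases hx : x ∈ B
            · simp [hx]
            · simp only [hx, not_false_eq_true, indicator_of_notMem]
              exact ENNReal.zero_rpow_of_pos (by positivity)
          simp_rw [this]
          rw [lintegral_indicator_const hB]; simp
    _ = m B ^ (1 - α) := one_mul _

variable [MetricSpace X]

lemma isProbabilityMeasure_cond_ball (m : Measure X) [IsProbabilityMeasure m] [m.IsOpenPosMeasure]
    (x : X) {r : ℝ} (hr : 0 < r) : IsProbabilityMeasure (m[|Metric.ball x r]) :=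
  ProbabilityTheory.cond_isProbabilityMeasure (Metric.measure_ball_pos m x hr).ne'

variable [BorelSpace X]

lemma finiteMoment_cond_ball (m : Measure X) [IsProbabilityMeasure m] (x : X) (r : ℝ)
    [IsProbabilityMeasure (m[|Metric.ball x r])] : FiniteMoment 1 (m[|Metric.ball x r]) := by
  refine ⟨x, ?_⟩
  have h : ∀ᵐ y ∂(m[|Metric.ball x r]), edist y x ^ (1 : ℝ) ≤ ENNReal.ofReal r := by
    filter_upwards [ProbabilityTheory.ae_cond_mem (μ := m) (s := Metric.ball x r) Metric.isOpen_ball.measurableSet]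
      with y hy
    rw [ENNReal.rpow_one, edist_dist]
    exact ENNReal.ofReal_le_ofReal (Metric.mem_ball.1 hy).le
  refine ((lintegral_mono_ae h).trans_lt ?_).ne
  simp

lemma rnDeriv_cond_ball (m : Measure X) [IsProbabilityMeasure m]
    (x : X) (r : ℝ) :
    ∀ᵐ y ∂(m[|Metric.ball x r]), (m[|Metric.ball x r]).rnDeriv m y = (m (Metric.ball x r))⁻¹ := by
  have hB : MeasurableSet (Metric.ball x r) := Metric.isOpen_ball.measurableSet
  have hw : m[|Metric.ball x r] =
      m.withDensity ((Metric.ball x r).indicator fun _ => (m (Metric.ball x r))⁻¹) := by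
    rw [withDensity_indicator hB, withDensity_const]; rfl
  have h1 : (m[|Metric.ball x r]).rnDeriv m =ᵐ[m]
      (Metric.ball x r).indicator fun _ => (m (Metric.ball x r))⁻¹ := by
    rw [hw]
    exact Measure.rnDeriv_withDensity _ (measurable_const.indicator hB)
  filter_upwards [ProbabilityTheory.ae_cond_mem (μ := m) hB,
    ProbabilityTheory.cond_absolutelyContinuous.ae_le h1] with y hy hy'
  rw [hy', indicator_of_mem hy]

end Doubling

section Contraction
variable {X : Type*} [MetricSpace X]

lemma continuous_eval (t : unitInterval) : Continuous (eval t : C(unitInterval, X) → X) :=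
  continuous_eval_const t

variable [MeasurableSpace X] [BorelSpace X]
    [MeasurableSpace C(unitInterval, X)] [BorelSpace C(unitInterval, X)]

lemma measurable_eval (t : unitInterval) : Measurable (eval t : C(unitInterval, X) → X) :=
  (continuous_eval t).measurable

/-- A dynamical plan from the uniform measure on `ball x R` to the uniform measure on the small
ball `ball x ε` moves the mass, at time `1 - s`, into a ball of radius about `s * R`; the entropy
inequality then compares the measures of the two balls. -/
lemma ball_contraction (m : Measure X) [IsProbabilityMeasure m] [m.IsOpenPosMeasure]
    {K N : ℝ} (hN : 1 < N) (hcd : CDone K N m) {R ε s : ℝ} (hR : 0 < R) (hε : 0 < ε)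
    (hs : 0 < s) (hs1 : s < 1) {c : ℝ≥0∞}
    (hc : ∀ θ, 0 ≤ θ → θ ≤ R + ε → c ≤ tauCoef K N s θ) (x : X) :
    c * m (Metric.ball x R) ^ (1 / N) ≤ m (Metric.ball x (s * (R + ε) + ε)) ^ (1 / N) := by
  have hN0 : 0 < N := by linarith
  have hα0 : 0 < 1 - 1 / N := by rw [sub_pos, div_lt_one hN0]; exact hN
  have hα1 : 1 - 1 / N < 1 := by
    have : 0 < 1 / N := by positivity
    linarith
  have := isProbabilityMeasure_cond_ball m x hR
  have := isProbabilityMeasure_cond_ball m x hε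
  have hBR : MeasurableSet (Metric.ball x R) := Metric.isOpen_ball.measurableSet
  have hBε : MeasurableSet (Metric.ball x ε) := Metric.isOpen_ball.measurableSet
  obtain ⟨π, hπ, hcsg, -, hπ0, hπ1, -, hent⟩ := hcd (m[|Metric.ball x R]) (m[|Metric.ball x ε])
    inferInstance inferInstance ProbabilityTheory.cond_absolutelyContinuous
    ProbabilityTheory.cond_absolutelyContinuous (finiteMoment_cond_ball m x R)
    (finiteMoment_cond_ball m x ε)
  let t : unitInterval := ⟨1 - s, by constructor <;> linarith⟩
  have hg0 : ∀ᵐ γ ∂π, γ 0 ∈ Metric.ball x R := by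
    have := ProbabilityTheory.ae_cond_mem (μ := m) hBR
    rw [← hπ0] at this
    exact ae_of_ae_map (measurable_eval 0).aemeasurable this
  have hg0' : ∀ᵐ γ ∂π, (m[|Metric.ball x R]).rnDeriv m (γ 0) = (m (Metric.ball x R))⁻¹ := by
    have : ∀ᵐ y ∂(π.map (eval 0)),
        (m[|Metric.ball x R]).rnDeriv m y = (m (Metric.ball x R))⁻¹ := by
      rw [hπ0]; exact rnDeriv_cond_ball m x R
    exact ae_of_ae_map (measurable_eval 0).aemeasurable this
  have hg1 : ∀ᵐ γ ∂π, γ 1 ∈ Metric.ball x ε := by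
    have := ProbabilityTheory.ae_cond_mem (μ := m) hBε
    rw [← hπ1] at this
    exact ae_of_ae_map (measurable_eval 1).aemeasurable this
  have hg : ∀ᵐ γ ∂π, IsCSG γ := by rw [ae_iff]; exact hcsg
  have hdist : ∀ᵐ γ ∂π, dist (γ 0) (γ 1) ≤ R + ε := by
    filter_upwards [hg0, hg1] with γ h0 h1
    rw [Metric.mem_ball] at h0 h1
    linarith [dist_triangle_right (γ 0) (γ 1) x]
  have : IsProbabilityMeasure (π.map (eval t)) :=
    Measure.isProbabilityMeasure_map (measurable_eval t).aemeasurable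
  have hconc : (π.map (eval t)) (Metric.ball x (s * (R + ε) + ε))ᶜ = 0 := by
    rw [Measure.map_apply (measurable_eval t) Metric.isOpen_ball.measurableSet.compl]
    have : ∀ᵐ γ ∂π, γ t ∈ Metric.ball x (s * (R + ε) + ε) := by
      filter_upwards [hg, hg1, hdist] with γ h h1 hd
      have h2 := h t 1
      have h3 : |((t : unitInterval) : ℝ) - ((1 : unitInterval) : ℝ)| = s := by
        simp [t, abs_of_pos hs]
      rw [h3] at h2
      rw [Metric.mem_ball] at h1 ⊢
      nlinarith [dist_triangle (γ t) (γ 1) x]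
    exact this
  have hup := entropy_le_measure_rpow hα0 hα1 m (π.map (eval t))
    (B := Metric.ball x (s * (R + ε) + ε)) Metric.isOpen_ball.measurableSet hconc
  rw [_root_.sub_sub_cancel] at hup
  refine le_trans ?_ ((hent t N le_rfl).trans hup)
  calc c * m (Metric.ball x R) ^ (1 / N)
      = ∫⁻ _, c * m (Metric.ball x R) ^ (1 / N) ∂π := by simp
    _ ≤ _ := by
        refine lintegral_mono_ae ?_
        filter_upwards [hg0', hdist] with γ h0 hd
        refine le_add_of_le_of_nonneg ?_ zero_le
        rw [h0, ENNReal.inv_rpow, ENNReal.rpow_neg, inv_inv]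
        refine mul_le_mul' ?_ le_rfl
        have : (1 : ℝ) - (t : ℝ) = s := by simp [t]
        rw [this]
        exact hc _ dist_nonneg hd

lemma exists_doubling (m : Measure X) [IsProbabilityMeasure m] [m.IsOpenPosMeasure]
    {K N : ℝ} (hN : 1 < N) (hcd : CDone K N m) {R r : ℝ} (hR : 0 < R) (hr : 0 < r) :
    ∃ c : ℝ≥0∞, 0 < c ∧ ∀ x : X, c * m (Metric.ball x R) ≤ m (Metric.ball x r) := by
  have hN0 : 0 < N := by linarith
  set s : ℝ := min (1 / 2) (r / (8 * R)) with hsdef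
  set ε : ℝ := min (r / 4) R with hεdef
  have hs : 0 < s := lt_min (by norm_num) (by positivity)
  have hs1 : s < 1 := (min_le_left _ _).trans_lt (by norm_num)
  have hε : 0 < ε := lt_min (by positivity) hR
  have hrad : s * (R + ε) + ε ≤ r := by
    have h1 : s * (R + ε) ≤ r / (8 * R) * (R + R) :=
      mul_le_mul (min_le_right _ _) (by linarith [min_le_right (r / 4) R]) (by positivity)
        (by positivity)
    have h2 : r / (8 * R) * (R + R) = r / 4 := by field_simp; norm_num
    have h3 : ε ≤ r / 4 := min_le_left _ _
    linarith
  obtain ⟨c, hc0, hc⟩ := tauCoef_exists_lower_bound (K := K) hN hs hs1 (R := R + ε) (by positivity)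
  refine ⟨c ^ N, ENNReal.rpow_pos_of_nonneg hc0 hN0.le, fun x => ?_⟩
  have h := ENNReal.rpow_le_rpow (ball_contraction m hN hcd hR hε hs hs1 hc x) hN0.le
  rw [ENNReal.mul_rpow_of_nonneg _ _ hN0.le, ← ENNReal.rpow_mul, ← ENNReal.rpow_mul,
    one_div_mul_cancel hN0.ne', ENNReal.rpow_one, ENNReal.rpow_one] at h
  exact h.trans (measure_mono (Metric.ball_subset_ball hrad))

/-- Doubling bounds the cardinality of separated sets in a ball, since `m` is finite; so balls are
totally bounded. -/
lemma properSpace_of_CDone [CompleteSpace X] (m : Measure X) [IsProbabilityMeasure m]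
    [m.IsOpenPosMeasure] {K N : ℝ} (hN : 1 < N) (hcd : CDone K N m) : ProperSpace X := by
  refine ⟨fun x r => ?_⟩
  refine TotallyBounded.isCompact_of_isClosed ?_ Metric.isClosed_closedBall
  rw [Metric.totallyBounded_iff]
  intro ε hε
  set R : ℝ := |r| + 1 with hRdef
  have hR : 0 < R := by positivity
  have hrR : r < R := (le_abs_self r).trans_lt (by linarith)
  obtain ⟨c, hc0, hc⟩ := exists_doubling m hN hcd (R := 2 * R) (r := ε / 4)
    (by positivity) (by positivity)
  obtain ⟨A, hA⟩ : ∃ A, Maximal (· ∈ {A : Set X | A ⊆ Metric.closedBall x r ∧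
      Metric.IsSeparated (ENNReal.ofReal (ε / 2)) A}) A := by
    refine zorn_subset _ fun C hC hchain => ⟨⋃₀ C, ⟨?_, ?_⟩, fun s hs => subset_sUnion_of_mem hs⟩
    · exact sUnion_subset fun s hs => (hC hs).1
    · exact (pairwise_sUnion hchain.directedOn).2 fun s hs => (hC hs).2
  have hcov : Metric.IsCover (Real.toNNReal (ε / 2)) (Metric.closedBall x r) A :=
    Metric.IsCover.of_maximal_isSeparated hA
  have hdisj : Pairwise (Function.onFun Disjoint fun y : A => Metric.ball (y : X) (ε / 4)) := by
    intro y z hyz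
    refine Metric.ball_disjoint_ball ?_
    have : ENNReal.ofReal (ε / 2) < edist (y : X) z :=
      hA.prop.2 y.2 z.2 (fun h => hyz (Subtype.ext h))
    rw [edist_dist, ENNReal.ofReal_lt_ofReal_iff_of_nonneg (by positivity)] at this
    linarith
  have hfin := Measure.finite_const_le_meas_of_disjoint_iUnion m
    (ε := c * m (Metric.ball x R))
    (ENNReal.mul_pos hc0.ne' (Metric.measure_ball_pos m x hR).ne')
    (fun y : A => Metric.isOpen_ball.measurableSet) hdisj (measure_ne_top _ _)
  have huniv : {y : A | c * m (Metric.ball x R) ≤ m (Metric.ball (y : X) (ε / 4))} = univ := by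
    refine eq_univ_of_forall fun y => ?_
    refine le_trans (mul_le_mul_right (measure_mono (Metric.ball_subset_ball' ?_)) _) (hc y)
    have := Metric.mem_closedBall'.1 (hA.prop.1 y.2)
    linarith
  rw [huniv] at hfin
  have : Finite A := finite_univ_iff.1 hfin
  refine ⟨A, toFinite A, fun z hz => ?_⟩
  obtain ⟨y, hy, hyz⟩ := hcov hz
  refine mem_iUnion₂.2 ⟨y, hy, ?_⟩
  have hyz' : edist z y ≤ ENNReal.ofReal (ε / 2) := hyz
  rw [edist_dist, ENNReal.ofReal_le_ofReal_iff (by positivity)] at hyz'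
  rw [Metric.mem_ball]
  linarith

end Contraction

/-! ### Compactness of geodesics and limit plans -/

section Compactness
variable {X : Type*} [MetricSpace X]

lemma isClosed_isCSG : IsClosed {γ : C(unitInterval, X) | IsCSG γ} := by
  have : {γ : C(unitInterval, X) | IsCSG γ} = ⋂ s : unitInterval, ⋂ t : unitInterval,
      {γ | dist (γ s) (γ t) = |(s : ℝ) - (t : ℝ)| * dist (γ 0) (γ 1)} := by
    ext γ; simp only [IsCSG, mem_iInter, mem_ofPred_eq]
  rw [this]
  refine isClosed_iInter fun s => isClosed_iInter fun t => isClosed_eq ?_ ?_ <;> fun_prop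

/-- In a proper space, geodesics with endpoints in given balls form a compact set
(Arzelà–Ascoli). -/
lemma isCompact_geodesics [ProperSpace X] (x0 : X) (R r : ℝ) :
    IsCompact {γ : C(unitInterval, X) | IsCSG γ ∧ γ 0 ∈ Metric.closedBall x0 R ∧
      γ 1 ∈ Metric.closedBall x0 r} := by
  set S := {γ : C(unitInterval, X) | IsCSG γ ∧ γ 0 ∈ Metric.closedBall x0 R ∧
      γ 1 ∈ Metric.closedBall x0 r} with hS
  have hle : ∀ γ ∈ S, dist (γ 0) (γ 1) ≤ R + r := fun γ hγ => by
    have h1 := Metric.mem_closedBall.1 hγ.2.1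
    have h2 := Metric.mem_closedBall.1 hγ.2.2
    linarith [dist_triangle_right (γ 0) (γ 1) x0]
  have hdist : ∀ γ ∈ S, ∀ s t : unitInterval, dist (γ s) (γ t) ≤ (R + r) * dist s t := by
    intro γ hγ s t
    rw [hγ.1 s t, mul_comm]
    have : dist s t = |(s : ℝ) - t| := rfl
    rw [this]
    exact mul_le_mul_of_nonneg_right (hle γ hγ) (abs_nonneg _)
  refine ArzelaAscoli.isCompact_of_equicontinuous S ?_ ?_
  · -- the image is a closed subset of a product of balls
    have himg : ContinuousMap.toFun '' S = {f : unitInterval → X |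
        (∀ s t : unitInterval, dist (f s) (f t) = |(s : ℝ) - (t : ℝ)| * dist (f 0) (f 1)) ∧
        f 0 ∈ Metric.closedBall x0 R ∧ f 1 ∈ Metric.closedBall x0 r} := by
      ext f
      constructor
      · rintro ⟨γ, hγ, rfl⟩
        exact hγ
      · rintro ⟨h1, h2, h3⟩
        have hf : LipschitzWith (Real.toNNReal (dist (f 0) (f 1))) f := by
          refine LipschitzWith.of_dist_le_mul fun s t => ?_
          rw [h1 s t, Real.coe_toNNReal _ dist_nonneg, mul_comm]
          exact le_rfl
        exact ⟨⟨f, hf.continuous⟩, ⟨h1, h2, h3⟩, rfl⟩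
    have hsub : ContinuousMap.toFun '' S ⊆
        univ.pi fun _ : unitInterval => Metric.closedBall x0 (R + (R + r)) := by
      rintro _ ⟨γ, hγ, rfl⟩ t -
      have h1 := Metric.mem_closedBall.1 hγ.2.1
      have h2 := hγ.1 t 0
      have h3 : |(t : ℝ) - ((0 : unitInterval) : ℝ)| ≤ 1 := by
        simpa [abs_of_nonneg t.2.1] using t.2.2
      have h4 : dist (γ t) (γ 0) ≤ R + r := by
        rw [h2]
        exact (mul_le_of_le_one_left dist_nonneg h3).trans (hle γ hγ)
      refine Metric.mem_closedBall.2 ?_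
      have := dist_triangle (γ t) (γ 0) x0
      change dist (γ t) x0 ≤ _
      linarith
    refine IsCompact.of_isClosed_subset
      (isCompact_univ_pi fun _ => isCompact_closedBall x0 (R + (R + r))) ?_ hsub
    rw [himg]
    simp only [ofPred_and, ofPred_forall]
    refine IsClosed.inter ?_ (IsClosed.inter ?_ ?_)
    · refine isClosed_iInter fun s => isClosed_iInter fun t => isClosed_eq ?_ ?_ <;> fun_prop
    · exact Metric.isClosed_closedBall.preimage (continuous_apply 0)
    · exact Metric.isClosed_closedBall.preimage (continuous_apply 1)
  · refine (LipschitzWith.uniformEquicontinuous _ (Real.toNNReal (R + r)) fun γ => ?_).equicontinuous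
    refine LipschitzWith.of_dist_le_mul fun s t => ?_
    refine (hdist γ γ.2 s t).trans ?_
    exact mul_le_mul_of_nonneg_right (Real.le_coe_toNNReal _) dist_nonneg

end Compactness

section Limit
variable {X : Type*} [MetricSpace X] [ProperSpace X]
    [MeasurableSpace X] [BorelSpace X]
    [MeasurableSpace C(unitInterval, X)] [BorelSpace C(unitInterval, X)]

/-- Dynamical plans with a fixed first marginal, and second marginals shrinking to `x0`, have a
limit point. -/
lemma exists_limit_plan (μ0 : Measure X) [IsProbabilityMeasure μ0] (x0 : X)
    (π : ℕ → ProbabilityMeasure C(unitInterval, X))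
    (hcsg : ∀ n, ∀ᵐ γ ∂(π n : Measure C(unitInterval, X)), IsCSG γ)
    (h0 : ∀ n, (π n : Measure C(unitInterval, X)).map (eval 0) = μ0)
    (h1 : ∀ n : ℕ, ∀ᵐ γ ∂(π n : Measure C(unitInterval, X)),
      γ 1 ∈ Metric.ball x0 (1 / ((n : ℝ) + 1))) :
    ∃ (L : Filter ℕ) (_ : L.NeBot) (_ : L ≤ atTop) (P : ProbabilityMeasure C(unitInterval, X)),
      Tendsto π L (𝓝 P) := by
  have htight : IsTightMeasureSet {((μ : ProbabilityMeasure C(unitInterval, X)) : Measure C(unitInterval, X)) | μ ∈ range π} := by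
    rw [isTightMeasureSet_iff_exists_isCompact_measure_compl_le]
    intro ε hε
    have hμ := (isTightMeasureSet_iff_exists_isCompact_measure_compl_le.1
      (isTightMeasureSet_singleton (μ := μ0))) ε hε
    obtain ⟨Q, hQ, hQε⟩ := hμ
    obtain ⟨R, hR⟩ := hQ.isBounded.subset_closedBall x0
    refine ⟨_, isCompact_geodesics x0 R 1, ?_⟩
    rintro _ ⟨_, ⟨n, rfl⟩, rfl⟩
    refine le_trans ?_ (hQε μ0 rfl)
    refine le_trans ?_ (measure_mono (compl_subset_compl.2 hR))
    rw [← h0 n, Measure.map_apply (measurable_eval 0) Metric.isClosed_closedBall.measurableSet.compl]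
    refine measure_mono_ae ?_
    filter_upwards [hcsg n, h1 n] with γ hγ hγ1 hmem
    refine fun hγ0 => hmem ⟨hγ, hγ0, ?_⟩
    have : (1 : ℝ) / ((n : ℝ) + 1) ≤ 1 := by
      rw [div_le_one (by positivity)]; linarith [n.cast_nonneg (α := ℝ)]
    exact Metric.mem_closedBall.2 ((Metric.mem_ball.1 hγ1).le.trans this)
  have hcomp := isCompact_closure_of_isTightMeasureSet htight
  obtain ⟨P, -, hP⟩ := hcomp.ultrafilter_le_nhds ((hyperfilter ℕ).map π) (by
    rw [le_principal_iff]
    refine Filter.mem_of_superset ?_ subset_closure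
    exact Filter.mem_map.2 (Filter.univ_mem' fun n => mem_range_self n))
  exact ⟨hyperfilter ℕ, inferInstance, Nat.hyperfilter_le_atTop, P, hP⟩

/-- A closed condition holding almost surely along the sequence holds almost surely for the limit. -/
lemma ae_mem_of_tendsto {E : Type*} [TopologicalSpace E] [HasOuterApproxClosed E]
    [MeasurableSpace E] [OpensMeasurableSpace E] {L : Filter ℕ} [L.NeBot]
    {π : ℕ → ProbabilityMeasure E} {P : ProbabilityMeasure E} (h : Tendsto π L (𝓝 P))
    {F : Set E} (hF : IsClosed F) (hae : ∀ᶠ n in L, ∀ᵐ γ ∂(π n : Measure E), γ ∈ F) :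
    ∀ᵐ γ ∂(P : Measure E), γ ∈ F := by
  have h1 := ProbabilityMeasure.limsup_measure_closed_le_of_tendsto h hF
  have h2 : ∀ᶠ n in L, (π n : Measure E) F = 1 := by
    filter_upwards [hae] with n hn
    exact (prob_compl_eq_zero_iff hF.measurableSet).1 hn
  have h3 : limsup (fun n => (π n : Measure E) F) L = 1 := by
    rw [limsup_congr h2]; simp
  rw [h3] at h1
  exact (prob_compl_eq_zero_iff hF.measurableSet).2 (le_antisymm prob_le_one h1)

end Limit

/-! ### Wasserstein distances along geodesics with a common endpoint -/

section Wasserstein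
variable {X : Type*} [MetricSpace X] [MeasurableSpace X] [BorelSpace X]

/-- Finiteness of the moment does not depend on the base point. -/
lemma moment_ne_top (μ0 : Measure X) [IsProbabilityMeasure μ0] {p : ℝ} (hp : 1 ≤ p)
    (hmom : FiniteMoment p μ0) (x0 : X) : (∫⁻ x, edist x x0 ^ p ∂μ0) ^ (1 / p) ≠ ∞ := by
  have hp0 : 0 < p := by linarith
  obtain ⟨y, hy⟩ := hmom
  have h := ENNReal.lintegral_Lp_add_le (μ := μ0) (f := fun x => edist x y)
    (g := fun _ => edist y x0) (by fun_prop) (by fun_prop) hp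
  refine ne_top_of_le_ne_top ?_ ((ENNReal.rpow_le_rpow (lintegral_mono fun x =>
    ENNReal.rpow_le_rpow (edist_triangle x y x0) hp0.le) (by positivity)).trans h)
  refine ENNReal.add_ne_top.2 ⟨ENNReal.rpow_ne_top_of_nonneg (by positivity) hy, ?_⟩
  refine ENNReal.rpow_ne_top_of_nonneg (by positivity) ?_
  simp [hp0.le, edist_ne_top]

/-- Minkowski's inequality for the distance to a base point along a coupling. -/
lemma moment_le_of_coupling [SecondCountableTopology X] {μ ν : Measure X}
    {q : Measure (X × X)} (hq : IsCoupling q μ ν)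
    {p : ℝ} (hp : 1 ≤ p) (x0 : X) :
    (∫⁻ x, edist x x0 ^ p ∂μ) ^ (1 / p) ≤
      (∫⁻ z, edist z.1 z.2 ^ p ∂q) ^ (1 / p) + (∫⁻ x, edist x x0 ^ p ∂ν) ^ (1 / p) := by
  have hp0 : 0 < p := by linarith
  have hm : Measurable fun x : X => edist x x0 ^ p := by fun_prop
  have h := ENNReal.lintegral_Lp_add_le (μ := q) (f := fun z => edist z.1 z.2)
    (g := fun z => edist z.2 x0) (by fun_prop) (by fun_prop) hp
  rw [← hq.1, ← hq.2, lintegral_map hm measurable_fst, lintegral_map hm measurable_snd]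
  exact (ENNReal.rpow_le_rpow (lintegral_mono fun z : X × X =>
    ENNReal.rpow_le_rpow (edist_triangle z.1 z.2 x0) hp0.le) (by positivity)).trans h

variable [MeasurableSpace C(unitInterval, X)] [BorelSpace C(unitInterval, X)]

lemma moment_eval (P : Measure C(unitInterval, X)) (x0 : X)
    (hcsg : ∀ᵐ γ ∂P, IsCSG γ) (h1 : ∀ᵐ γ ∂P, γ 1 = x0) {p : ℝ} (hp : 1 ≤ p) (t : unitInterval) :
    (∫⁻ x, edist x x0 ^ p ∂(P.map (eval t))) ^ (1 / p) =
      ENNReal.ofReal (1 - (t : ℝ)) * (∫⁻ γ, edist (γ 0) (γ 1) ^ p ∂P) ^ (1 / p) := by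
  have hp0 : 0 < p := by linarith
  have hm : Measurable fun x : X => edist x x0 ^ p := by fun_prop
  rw [lintegral_map hm (measurable_eval t)]
  have : ∫⁻ γ, edist (eval t γ) x0 ^ p ∂P =
      ∫⁻ γ, ENNReal.ofReal (1 - (t : ℝ)) ^ p * edist (γ 0) (γ 1) ^ p ∂P := by
    refine lintegral_congr_ae ?_
    filter_upwards [hcsg, h1] with γ hγ hγ1
    rw [← ENNReal.mul_rpow_of_nonneg _ _ hp0.le, ← hγ1, edist_dist, edist_dist,
      ← ENNReal.ofReal_mul (by linarith [t.2.2])]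
    congr 2
    have := hγ t 1
    rw [Icc.coe_one, abs_sub_comm, abs_of_nonneg (by linarith [t.2.2])] at this
    exact this
  rw [this, lintegral_const_mul' _ _ (ENNReal.rpow_ne_top_of_nonneg hp0.le ENNReal.ofReal_ne_top),
    ENNReal.mul_rpow_of_nonneg _ _ (by positivity), ← ENNReal.rpow_mul,
    mul_one_div_cancel hp0.ne', ENNReal.rpow_one]

/-- Along a plan concentrated on geodesics ending at `x0`, the marginals move at constant speed:
the plan itself gives the upper bound, and comparing the distances to `x0` gives the lower one. -/
lemma Wp_eval [SecondCountableTopology X] (P : Measure C(unitInterval, X)) (x0 : X)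
    (hcsg : ∀ᵐ γ ∂P, IsCSG γ) (h1 : ∀ᵐ γ ∂P, γ 1 = x0) {p : ℝ} (hp : 1 ≤ p)
    (hfin : (∫⁻ γ, edist (γ 0) (γ 1) ^ p ∂P) ^ (1 / p) ≠ ∞) (s t : unitInterval) :
    Wp p (P.map (eval s)) (P.map (eval t)) =
      ENNReal.ofReal |(s : ℝ) - t| * (∫⁻ γ, edist (γ 0) (γ 1) ^ p ∂P) ^ (1 / p) := by
  have hp0 : 0 < p := by linarith
  set M := (∫⁻ γ, edist (γ 0) (γ 1) ^ p ∂P) ^ (1 / p) with hM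
  refine le_antisymm ?_ ?_
  · have hmeas : Measurable fun γ : C(unitInterval, X) => (eval s γ, eval t γ) :=
      (measurable_eval s).prodMk (measurable_eval t)
    have hq : IsCoupling (P.map fun γ => (eval s γ, eval t γ)) (P.map (eval s)) (P.map (eval t)) := by
      constructor
      · rw [Measure.map_map measurable_fst hmeas]; rfl
      · rw [Measure.map_map measurable_snd hmeas]; rfl
    have hcost : ∫⁻ z, edist z.1 z.2 ^ p ∂(P.map fun γ => (eval s γ, eval t γ)) =
        ENNReal.ofReal |(s : ℝ) - t| ^ p * ∫⁻ γ, edist (γ 0) (γ 1) ^ p ∂P := by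
      rw [lintegral_map (by fun_prop) hmeas, ← lintegral_const_mul' _ _
        (ENNReal.rpow_ne_top_of_nonneg hp0.le ENNReal.ofReal_ne_top)]
      refine lintegral_congr_ae ?_
      filter_upwards [hcsg] with γ hγ
      rw [← ENNReal.mul_rpow_of_nonneg _ _ hp0.le, edist_dist, edist_dist,
        ← ENNReal.ofReal_mul (abs_nonneg _)]
      congr 2
      exact hγ s t
    have hle : Wcost p (P.map (eval s)) (P.map (eval t)) ≤
        ENNReal.ofReal |(s : ℝ) - t| ^ p * ∫⁻ γ, edist (γ 0) (γ 1) ^ p ∂P :=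
      (iInf₂_le (P.map fun γ => (eval s γ, eval t γ)) hq).trans_eq hcost
    refine (ENNReal.rpow_le_rpow hle (by positivity)).trans_eq ?_
    rw [ENNReal.mul_rpow_of_nonneg _ _ (by positivity), ← ENNReal.rpow_mul,
      mul_one_div_cancel hp0.ne', ENNReal.rpow_one]
  · rw [Wp, one_div, ENNReal.le_rpow_inv_iff hp0]
    refine le_iInf₂ fun q hq => ?_
    rw [← ENNReal.le_rpow_inv_iff hp0, ← one_div]
    have hq' : IsCoupling (q.map Prod.swap) (P.map (eval t)) (P.map (eval s)) := by
      constructor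
      · rw [Measure.map_map measurable_fst measurable_swap, ← hq.2]; rfl
      · rw [Measure.map_map measurable_snd measurable_swap, ← hq.1]; rfl
    have hc' : ∫⁻ z, edist z.1 z.2 ^ p ∂(q.map Prod.swap) = ∫⁻ z, edist z.1 z.2 ^ p ∂q := by
      rw [lintegral_map (by fun_prop) measurable_swap]
      simp [edist_comm]
    have hst := moment_le_of_coupling hq hp x0
    have hts := moment_le_of_coupling hq' hp x0
    rw [hc'] at hts
    rw [moment_eval P x0 hcsg h1 hp, moment_eval P x0 hcsg h1 hp, ← hM] at hst hts
    set D := (∫⁻ z, edist z.1 z.2 ^ p ∂q) ^ (1 / p)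
    rcases eq_or_ne D ∞ with hD | hD
    · simp [hD]
    have hs0 : 0 ≤ 1 - (s : ℝ) := by linarith [s.2.2]
    have ht0 : 0 ≤ 1 - (t : ℝ) := by linarith [t.2.2]
    lift D to ℝ≥0 using hD with d
    lift M to ℝ≥0 using hfin with M'
    rw [← ENNReal.ofReal_coe_nnreal (p := d), ← ENNReal.ofReal_coe_nnreal (p := M'),
      ← ENNReal.ofReal_mul hs0, ← ENNReal.ofReal_mul ht0,
      ← ENNReal.ofReal_add d.coe_nonneg (mul_nonneg (by assumption) M'.coe_nonneg),
      ENNReal.ofReal_le_ofReal_iff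
        (add_nonneg d.coe_nonneg (mul_nonneg (by assumption) M'.coe_nonneg))] at hst hts
    rw [← ENNReal.ofReal_coe_nnreal (p := d), ← ENNReal.ofReal_coe_nnreal (p := M'),
      ← ENNReal.ofReal_mul (abs_nonneg _)]
    refine ENNReal.ofReal_le_ofReal ?_
    rcases abs_cases ((s : ℝ) - t) with h | h <;> rw [h.1] <;> linarith

end Wasserstein

/-! ### Passage to the limit in the entropy inequality -/

section Envelope

/-- The infimum of `f` over the ball of radius `1 / (n + 1)`. -/
def lowEnv (f : ℝ → ℝ≥0∞) (n : ℕ) (θ : ℝ) : ℝ≥0∞ :=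
  ⨅ θ' ∈ Metric.ball θ (1 / ((n : ℝ) + 1)), f θ'

lemma measurable_lowEnv (f : ℝ → ℝ≥0∞) (n : ℕ) : Measurable (lowEnv f n) := by
  refine measurable_of_Iio fun c => IsOpen.measurableSet ?_
  have : lowEnv f n ⁻¹' Iio c = ⋃ θ' ∈ {θ' | f θ' < c}, Metric.ball θ' (1 / ((n : ℝ) + 1)) := by
    ext θ
    simp only [lowEnv, mem_preimage, mem_Iio, iInf_lt_iff, mem_iUnion, mem_ofPred_eq, exists_prop]
    constructor
    · rintro ⟨θ', h1, h2⟩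
      exact ⟨θ', h2, Metric.mem_ball_comm.1 h1⟩
    · rintro ⟨θ', h1, h2⟩
      exact ⟨θ', Metric.mem_ball_comm.1 h2, h1⟩
  rw [this]
  exact isOpen_biUnion fun _ _ => Metric.isOpen_ball

lemma lowEnv_mono (f : ℝ → ℝ≥0∞) : Monotone (lowEnv f) := by
  intro n k hnk θ
  refine biInf_mono fun θ' hθ' => Metric.ball_subset_ball ?_ hθ'
  have : (n : ℝ) ≤ k := by exact_mod_cast hnk
  exact one_div_le_one_div_of_le (by positivity) (by linarith)

lemma iSup_lowEnv {f : ℝ → ℝ≥0∞} (hf : LowerSemicontinuous f) (θ : ℝ) :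
    ⨆ n, lowEnv f n θ = f θ := by
  refine le_antisymm (iSup_le fun n => iInf₂_le θ (Metric.mem_ball_self (by positivity))) ?_
  refine le_of_forall_lt fun c hc => ?_
  obtain ⟨c', hcc', hc'⟩ := exists_between hc
  obtain ⟨ε, hε, hball⟩ := Metric.eventually_nhds_iff_ball.1 (hf θ c' hc')
  obtain ⟨n, hn⟩ := exists_nat_one_div_lt hε
  refine hcc'.trans_le (le_iSup_of_le n (le_iInf₂ fun θ' hθ' => ?_))
  exact (hball θ' (Metric.ball_subset_ball hn.le hθ')).le

end Envelope

section LimitEntropy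
variable {X : Type*} [MetricSpace X] [MeasurableSpace X] [BorelSpace X]

/-- The inequality at time `0`, deduced from finiteness of the left side at an interior time. -/
lemma entropy_zero {K N s : ℝ} (hN : 1 < N) (hs : 0 < s) (m μ0 : Measure X)
    [IsProbabilityMeasure m] [IsProbabilityMeasure μ0] (hac : μ0 ≪ m) (x0 : X)
    (hfin : ∫⁻ x, tauCoef K N s (dist x x0) * (μ0.rnDeriv m x) ^ (-(1 / N)) ∂μ0 ≤ 1)
    (hmeas : Measurable (tauCoef K N s)) :
    ∫⁻ x, tauCoef K N 1 (dist x x0) * (μ0.rnDeriv m x) ^ (-(1 / N)) ∂μ0 ≤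
      ∫⁻ x, (μ0.rnDeriv m x) ^ (1 - 1 / N) ∂m := by
  have hN0 : 0 < N := by linarith
  have hρ := Measure.measurable_rnDeriv μ0 m
  have hae : ∀ᵐ x ∂μ0, tauCoef K N s (dist x x0) * (μ0.rnDeriv m x) ^ (-(1 / N)) < ∞ :=
    ae_lt_top ((hmeas.comp (by fun_prop)).mul (hρ.pow_const _))
      (hfin.trans_lt ENNReal.one_lt_top).ne
  have hρtop : ∀ᵐ x ∂μ0, μ0.rnDeriv m x < ∞ := hac.ae_le (Measure.rnDeriv_lt_top μ0 m)
  calc ∫⁻ x, tauCoef K N 1 (dist x x0) * (μ0.rnDeriv m x) ^ (-(1 / N)) ∂μ0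
      ≤ ∫⁻ x, (μ0.rnDeriv m x) ^ (-(1 / N)) ∂μ0 := by
        refine lintegral_mono_ae ?_
        filter_upwards [hae, hρtop] with x hx hxt
        refine mul_le_of_le_one_left zero_le (tauCoef_one_of_ne_top hN hs fun htop => ?_)
        rw [htop, ENNReal.top_mul] at hx
        · exact lt_irrefl _ hx
        · rw [ENNReal.rpow_neg]
          exact ENNReal.inv_ne_zero.2 (ENNReal.rpow_ne_top_of_nonneg (by positivity) hxt.ne)
    _ = ∫⁻ x, μ0.rnDeriv m x * (μ0.rnDeriv m x) ^ (-(1 / N)) ∂m := by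
        exact (lintegral_rnDeriv_mul hac (hρ.pow_const _).aemeasurable).symm
    _ ≤ ∫⁻ x, (μ0.rnDeriv m x) ^ (1 - 1 / N) ∂m := by
        refine lintegral_mono_ae ?_
        filter_upwards [Measure.rnDeriv_lt_top μ0 m] with x hx
        rcases eq_or_ne (μ0.rnDeriv m x) 0 with h | h
        · simp [h]
        · rw [sub_eq_add_neg, ENNReal.rpow_add _ _ h hx.ne, ENNReal.rpow_one]

variable [MeasurableSpace C(unitInterval, X)] [BorelSpace C(unitInterval, X)]

/-- The entropy inequality passes to the limit: the second endpoints converge to `x0`, so that on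
the left the coefficient is eventually above each of its lower envelopes at `dist x x0`, and the
right side is upper semicontinuous. -/
lemma entropy_limit {α : ℝ} (hα0 : 0 < α) (hα1 : α < 1) (m μ0 : Measure X)
    [IsProbabilityMeasure m] (x0 : X)
    {π : ℕ → ProbabilityMeasure C(unitInterval, X)} {P : ProbabilityMeasure C(unitInterval, X)}
    (h0 : ∀ n, (π n : Measure C(unitInterval, X)).map (eval 0) = μ0)
    (h1 : ∀ n : ℕ, ∀ᵐ γ ∂(π n : Measure C(unitInterval, X)),
      γ 1 ∈ Metric.ball x0 (1 / ((n : ℝ) + 1)))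
    {L : Filter ℕ} [L.NeBot] (hL : L ≤ atTop) (hlim : Tendsto π L (𝓝 P))
    {f : ℝ → ℝ≥0∞} (hf : LowerSemicontinuous f) {g : X → ℝ≥0∞} (hg : Measurable g)
    (t : unitInterval)
    (hent : ∀ n, ∫⁻ γ, f (dist (γ 0) (γ 1)) * g (γ 0) ∂(π n : Measure C(unitInterval, X)) ≤
      ∫⁻ x, (((π n : Measure C(unitInterval, X)).map (eval t)).rnDeriv m x) ^ α ∂m) :
    ∫⁻ x, f (dist x x0) * g x ∂μ0 ≤
      ∫⁻ x, (((P : Measure C(unitInterval, X)).map (eval t)).rnDeriv m x) ^ α ∂m := by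
  have hmeas : ∀ k, Measurable fun x => lowEnv f k (dist x x0) * g x := fun k =>
    ((measurable_lowEnv f k).comp (by fun_prop)).mul hg
  have hsup : ∀ x, f (dist x x0) * g x = ⨆ k, lowEnv f k (dist x x0) * g x := fun x => by
    rw [← ENNReal.iSup_mul, iSup_lowEnv hf]
  simp_rw [hsup]
  rw [lintegral_iSup hmeas fun a b hab x => mul_le_mul_left (lowEnv_mono f hab _) _]
  refine iSup_le fun k => ?_
  refine entropy_usc hα0 hα1 m
    (ProbabilityMeasure.tendsto_map_of_tendsto_of_continuous π P hlim (continuous_eval t)) ?_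
  filter_upwards [hL (eventually_ge_atTop k)] with n hn
  refine le_trans ?_ (hent n)
  rw [← h0 n, lintegral_map (hmeas k) (measurable_eval 0)]
  refine lintegral_mono_ae ?_
  filter_upwards [h1 n] with γ hγ
  refine mul_le_mul_left (iInf₂_le _ (Metric.mem_ball.2 ?_)) _
  have hle : 1 / ((n : ℝ) + 1) ≤ 1 / ((k : ℝ) + 1) := by
    have : (k : ℝ) ≤ n := by exact_mod_cast hn
    exact one_div_le_one_div_of_le (by positivity) (by linarith)
  refine lt_of_le_of_lt ?_ ((Metric.mem_ball.1 hγ).trans_le hle)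
  rw [Real.dist_eq]
  have h2 := abs_dist_sub_le (γ 1) x0 (γ 0)
  rwa [dist_comm (γ 1) (γ 0), dist_comm x0 (γ 0)] at h2

end LimitEntropy

/-! ### The contraction property -/

/-- **Lemma 3.2.** A metric measure space with `m(X) = 1` (and `supp m = X`) satisfying
`CD₁(K,N)` satisfies the following version of `MCP(K,N)`: for any absolutely continuous
`μ₀ ∈ P(X)` with all moments finite and any `x₀ ∈ X` there is a curve `(μ_t)` from `μ₀` to
`δ_{x₀}` which is a `W_p`-geodesic for every `p ∈ [1,∞)` and satisfies
`∫ ρ_t^{1-1/N'} dm ≥ ∫ τ_{K,N'}^{(1-t)}(d(x,x₀)) ρ₀(x)^{-1/N'} μ₀(dx)` for `t ∈ [0,1)`,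
`N' ≥ N`, where `ρ_t` is the density of the absolutely continuous part of `μ_t`. -/
theorem mcp_of_cdOne
    {X : Type*} [MetricSpace X] [CompleteSpace X] [SecondCountableTopology X]
    [MeasurableSpace X] [BorelSpace X]
    [MeasurableSpace C(unitInterval, X)] [BorelSpace C(unitInterval, X)]
    (m : Measure X) [IsProbabilityMeasure m] [m.IsOpenPosMeasure]
    (K N : ℝ) (hN : 1 < N)
    (hcd : CDone K N m)
    (μ0 : Measure X) [IsProbabilityMeasure μ0] (hac : μ0 ≪ m)
    (hmom : ∀ p : ℝ, 1 ≤ p → FiniteMoment p μ0)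
    (x0 : X) :
    ∃ μ : ℝ → Measure X,
      μ 0 = μ0 ∧ μ 1 = Measure.dirac x0 ∧
      (∀ t ∈ Icc (0:ℝ) 1, IsProbabilityMeasure (μ t)) ∧
      (∀ p : ℝ, 1 ≤ p → ∀ s ∈ Icc (0:ℝ) 1, ∀ t ∈ Icc (0:ℝ) 1,
        Wp p (μ s) (μ t) = ENNReal.ofReal |s - t| * Wp p μ0 (Measure.dirac x0)) ∧
      (∀ t ∈ Ico (0:ℝ) 1, ∀ N', N ≤ N' →
        ∫⁻ x, tauCoef K N' (1 - t) (dist x x0) * (μ0.rnDeriv m x) ^ (-(1 / N')) ∂μ0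
          ≤ ∫⁻ x, ((μ t).rnDeriv m x) ^ (1 - 1 / N') ∂m) := by
  have : ProperSpace X := properSpace_of_CDone m hN hcd
  have hr : ∀ n : ℕ, 0 < 1 / ((n : ℝ) + 1) := fun n => by positivity
  have hprob := fun n => isProbabilityMeasure_cond_ball m x0 (hr n)
  choose π hπ hcsg _ hπ0 hπ1 _ hent using fun n : ℕ =>
    hcd μ0 (ProbabilityTheory.cond m (Metric.ball x0 (1 / ((n : ℝ) + 1)))) inferInstance (hprob n)
      hac ProbabilityTheory.cond_absolutelyContinuous (hmom 1 le_rfl)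
      (finiteMoment_cond_ball m x0 _)
  let Q : ℕ → ProbabilityMeasure C(unitInterval, X) := fun n => ⟨π n, hπ n⟩
  have hQcsg : ∀ n, ∀ᵐ γ ∂(Q n : Measure C(unitInterval, X)), IsCSG γ := fun n => by
    rw [ae_iff]; exact hcsg n
  have hQ1 : ∀ n : ℕ, ∀ᵐ γ ∂(Q n : Measure C(unitInterval, X)),
      γ 1 ∈ Metric.ball x0 (1 / ((n : ℝ) + 1)) := fun n => by
    have := ProbabilityTheory.ae_cond_mem (μ := m)
      (s := Metric.ball x0 (1 / ((n : ℝ) + 1))) Metric.isOpen_ball.measurableSet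
    rw [← hπ1 n] at this
    exact ae_of_ae_map (measurable_eval 1).aemeasurable this
  obtain ⟨L, _, hL, P, hP⟩ := exists_limit_plan μ0 x0 Q hQcsg hπ0 hQ1
  have hPcsg : ∀ᵐ γ ∂(P : Measure C(unitInterval, X)), IsCSG γ :=
    ae_mem_of_tendsto hP isClosed_isCSG (Eventually.of_forall hQcsg)
  have hP1 : ∀ᵐ γ ∂(P : Measure C(unitInterval, X)), γ 1 = x0 := by
    have : ∀ k : ℕ, ∀ᵐ γ ∂(P : Measure C(unitInterval, X)),
        γ ∈ eval 1 ⁻¹' Metric.closedBall x0 (1 / ((k : ℝ) + 1)) := fun k => by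
      refine ae_mem_of_tendsto hP (Metric.isClosed_closedBall.preimage (continuous_eval 1)) ?_
      filter_upwards [hL (eventually_ge_atTop k)] with n hn
      filter_upwards [hQ1 n] with γ hγ
      refine Metric.mem_closedBall.2 ((Metric.mem_ball.1 hγ).le.trans ?_)
      have : (k : ℝ) ≤ n := by exact_mod_cast hn
      exact one_div_le_one_div_of_le (by positivity) (by linarith)
    filter_upwards [ae_all_iff.2 this] with γ hγ
    refine dist_le_zero.1 (ge_of_tendsto tendsto_one_div_add_atTop_nhds_zero_nat
      (Eventually.of_forall fun k => Metric.mem_closedBall.1 (hγ k)))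
  have hP0 : (P : Measure C(unitInterval, X)).map (eval 0) = μ0 := by
    have hlim := ProbabilityMeasure.tendsto_map_of_tendsto_of_continuous Q P hP (continuous_eval 0)
    have hconst : (fun n => (Q n).map (continuous_eval 0).measurable.aemeasurable) =
        fun _ => (⟨μ0, inferInstance⟩ : ProbabilityMeasure X) :=
      funext fun n => Subtype.ext (hπ0 n)
    rw [hconst] at hlim
    exact congrArg ProbabilityMeasure.toMeasure (tendsto_nhds_unique hlim tendsto_const_nhds)
  have hPd : (P : Measure C(unitInterval, X)).map (eval 1) = Measure.dirac x0 := by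
    have : (eval 1 : C(unitInterval, X) → X) =ᵐ[(P : Measure C(unitInterval, X))] fun _ => x0 := hP1
    rw [Measure.map_congr this, Measure.map_const]
    simp
  have hprobt : ∀ t : unitInterval,
      IsProbabilityMeasure ((P : Measure C(unitInterval, X)).map (eval t)) := fun t =>
    Measure.isProbabilityMeasure_map (measurable_eval t).aemeasurable
  have hproj : ∀ t (ht : t ∈ Icc (0 : ℝ) 1), projIcc (0 : ℝ) 1 zero_le_one t = ⟨t, ht⟩ :=
    fun t ht => projIcc_of_mem _ ht
  have hproj0 : projIcc (0 : ℝ) 1 zero_le_one 0 = (0 : unitInterval) := projIcc_left _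
  have hproj1 : projIcc (0 : ℝ) 1 zero_le_one 1 = (1 : unitInterval) := projIcc_right _
  have hmain : ∀ t : unitInterval, 0 < (t : ℝ) → (t : ℝ) < 1 → ∀ N', N ≤ N' →
      ∫⁻ x, tauCoef K N' (1 - t) (dist x x0) * (μ0.rnDeriv m x) ^ (-(1 / N')) ∂μ0
        ≤ ∫⁻ x, (((P : Measure C(unitInterval, X)).map (eval t)).rnDeriv m x) ^ (1 - 1 / N') ∂m := by
    intro t ht0 ht1 N' hNN'
    have hN' : 1 < N' := by linarith
    have hN'0 : 0 < N' := by linarith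
    have h1N : 0 < 1 / N' := by positivity
    have h1N' : 1 / N' < 1 := (div_lt_one hN'0).2 hN'
    refine entropy_limit (by linarith) (by linarith) m μ0 x0 (π := Q) hπ0 hQ1 hL hP
      (tauCoef_lsc hN' (by linarith) (by linarith))
      ((Measure.measurable_rnDeriv μ0 m).pow_const _) t fun n => ?_
    -- the term of the curvature inequality belonging to the second endpoint is discarded
    refine le_trans (lintegral_mono fun γ => ?_) (hent n t N' hNN')
    exact le_add_of_nonneg_right zero_le
  refine ⟨fun t => (P : Measure C(unitInterval, X)).map (eval (projIcc 0 1 zero_le_one t)),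
    ?_, ?_, fun t _ => hprobt _, ?_, ?_⟩
  · simpa only [hproj0] using hP0
  · simpa only [hproj1] using hPd
  · intro p hp s hs t ht
    have hfin : (∫⁻ γ, edist (γ 0) (γ 1) ^ p ∂(P : Measure C(unitInterval, X))) ^ (1 / p) ≠ ∞ := by
      have h := moment_eval (P : Measure C(unitInterval, X)) x0 hPcsg hP1 hp 0
      rw [hP0, Icc.coe_zero, _root_.sub_zero, ENNReal.ofReal_one, one_mul] at h
      rw [← h]
      exact moment_ne_top μ0 hp (hmom p hp) x0
    have hW := Wp_eval (P : Measure C(unitInterval, X)) x0 hPcsg hP1 hp hfin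
    have hW01 := hW 0 1
    rw [hP0, hPd] at hW01
    simp only [Icc.coe_zero, Icc.coe_one, _root_.zero_sub, abs_neg, abs_one, ENNReal.ofReal_one,
      one_mul] at hW01
    simp only [hW01, hproj s hs, hproj t ht]
    exact hW ⟨s, hs⟩ ⟨t, ht⟩
  · intro t ht N' hNN'
    have hN' : 1 < N' := by linarith
    have hN'0 : 0 < N' := by linarith
    have h1N : 0 < 1 / N' := by positivity
    have h1N' : 1 / N' < 1 := (div_lt_one hN'0).2 hN'
    rcases ht.1.eq_or_lt with rfl | ht0
    · simp only [hproj0, hP0, _root_.sub_zero]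
      let h : unitInterval := ⟨1 / 2, by norm_num, by norm_num⟩
      have hhalf := hmain h (by norm_num [h]) (by norm_num [h]) N' hNN'
      have := hprobt h
      exact entropy_zero hN' (s := 1 - (h : ℝ)) (by norm_num [h]) m μ0 hac x0
        (hhalf.trans (entropy_le_one (by linarith) (by linarith) m _))
        (tauCoef_lsc hN' (by norm_num [h]) (by norm_num [h])).measurable
    · simp only [hproj t ⟨ht.1, ht.2.le⟩]
      exact hmain ⟨t, ht.1, ht.2.le⟩ ht0 ht.2 N' hNN'

end CDNote
end
end

section
/- Let (X,d) be a complete separable metric space and u : X → ℝ a 1-Lipschitz function. Then the non-branched transport relation R_u^b is an equivalence relation on the non-branched transport set T_u^b: for all x,y,z ∈ T_u^b one has (x,x) ∈ R_u^b; if (x,y) ∈ R_u^b then (y,x) ∈ R_u^b; and if (x,y) ∈ R_u^b and (y,z) ∈ R_u^b then (x,z) ∈ R_u^b. -/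
/-!
Reflexivity and symmetry of `Rub u` are immediate from the definitions. For transitivity through
`y`: if `x, y, z` lie on a monotone chain for `Gamma u`, the triangle inequality and the Lipschitz
bound give `(x, z) ∈ Ru u` (`gamma_trans`). Otherwise `x` and `z` both lie after `y` or both before
`y`, and `(x, z) ∉ Ru u` would make `y` a forward, respectively backward, branching point.
-/

open MeasureTheory Set ENNReal

noncomputable section

namespace CDNote

theorem gamma_trans {X : Type*} [MetricSpace X] {u : X → ℝ} (hu : LipschitzWith 1 u) {x y z : X}
    (hxy : (x, y) ∈ Gamma u) (hyz : (y, z) ∈ Gamma u) : (x, z) ∈ Gamma u := by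
  have hLip : u x - u z ≤ dist x z := by
    have h := hu.dist_le_mul x z
    rw [Real.dist_eq, NNReal.coe_one, one_mul] at h
    exact (le_abs_self _).trans h
  have htri := dist_triangle x y z
  simp only [Gamma, mem_ofPred_eq] at *
  linarith

/-- **Proposition.** The non-branched transport relation `R_u^b` is an equivalence relation on
the non-branched transport set `T_u^b`. -/
theorem rub_equivalence
    {X : Type*} [MetricSpace X] [CompleteSpace X] [SecondCountableTopology X]
    (u : X → ℝ) (hu : LipschitzWith 1 u) :
    (∀ x ∈ Tub u, (x, x) ∈ Rub u) ∧
    (∀ x ∈ Tub u, ∀ y ∈ Tub u, (x, y) ∈ Rub u → (y, x) ∈ Rub u) ∧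
    (∀ x ∈ Tub u, ∀ y ∈ Tub u, ∀ z ∈ Tub u,
      (x, y) ∈ Rub u → (y, z) ∈ Rub u → (x, z) ∈ Rub u) := by
  refine ⟨fun x hx => ⟨Or.inl (by simp [Gamma]), hx, hx⟩,
    fun x hx y hy h => ⟨h.1.symm, hy, hx⟩, ?_⟩
  intro x hx y hy z hz hxy hyz
  refine ⟨?_, hx, hz⟩
  rcases hxy.1 with hxy | hyx <;> rcases hyz.1 with hyz | hzy
  · exact Or.inl (gamma_trans hu hxy hyz)
  · by_contra hn
    exact hy.2 (Or.inr ⟨hy.1, x, z, hxy, hzy, hn⟩)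
  · by_contra hn
    exact hy.2 (Or.inl ⟨hy.1, x, z, hyx, hyz, hn⟩)
  · exact Or.inr (gamma_trans hu hzy hyx)

end CDNote
end
end

section
/- Let (X,d) be a complete separable geodesic metric space and u : X → ℝ a 1-Lipschitz function. Then for every x ∈ T_u^b and every z,w ∈ R_u(x), there exists a constant speed geodesic γ ∈ Geo(X) such that {x,z,w} ⊆ {γ_s : s ∈ [0,1]}. -/
/-!
Non-branching at `x` forces `x`, `z`, `w` to be pairwise related by `R_u`: if `z` and `w` lie on
the same side of `x` this is exactly `x ∉ A_{+,u} ∪ A_{-,u}`, and if they lie on opposite sides then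
`x` is between them. So the three points, suitably named `a`, `b`, `c`, satisfy
`(a, b), (b, c) ∈ Γ_u`, and since `u` is 1-Lipschitz,
`d(a, c) ≥ u a - u c = d(a, b) + d(b, c)` (`dist_eq_of_chain`).

Equality in the triangle inequality lets a geodesic from `a` to `b` be glued to one from `b` to `c`
(`exists_csg_of_dist_eq`): parametrized by arclength, the concatenation is a 1-Lipschitz
curve defined for times in `[0, d(a, c)]` and joining `a` to `c`, and such a curve cannot shorten
any distance.
-/

open MeasureTheory Set ENNReal

noncomputable section

namespace CDNote

section Helpers
variable {X : Type*} [MetricSpace X]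

/-- Arclength reparametrization of a constant speed geodesic, extended by constants to all of `ℝ`;
only the 1-Lipschitz bound and the endpoints are recorded. -/
lemma exists_arclength
    (hgeo : ∀ x y : X, ∃ γ : C(unitInterval, X), IsCSG γ ∧ γ 0 = x ∧ γ 1 = y) (a b : X) :
    ∃ f : ℝ → X, f 0 = a ∧ f (dist a b) = b ∧ ∀ s t, dist (f s) (f t) ≤ |s - t| := by
  obtain ⟨γ, hγ, h0, h1⟩ := hgeo a b
  rcases eq_or_ne a b with rfl | hab
  · exact ⟨fun _ => a, rfl, rfl, fun s t => by simp⟩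
  have hp : 0 < dist a b := dist_pos.2 hab
  refine ⟨fun s => γ (projIcc 0 1 zero_le_one (s / dist a b)), ?_, ?_, fun s t => ?_⟩
  · simp only [zero_div, projIcc_left]
    exact h0
  · simp only [div_self hp.ne', projIcc_right]
    exact h1
  · have h := abs_projIcc_sub_projIcc (c := s / dist a b) (d := t / dist a b)
      (zero_le_one (α := ℝ))
    rw [hγ, h0, h1]
    calc _ ≤ |s / dist a b - t / dist a b| * dist a b := by gcongr
      _ = |s - t| := by
        rw [← sub_div, abs_div, abs_of_pos hp, div_mul_cancel₀ _ hp.ne']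

/-- A curve on `[0, d(a, c)]` from `a` to `c` that does not increase distances is an isometry,
because `a` and `c` are as far apart as the curve is long. -/
lemma dist_eq_of_lipschitz {a c : X} {g : ℝ → X} (h0 : g 0 = a) (h1 : g (dist a c) = c)
    (hg : ∀ s t, s ≤ t → dist (g s) (g t) ≤ t - s) {s t : ℝ} (hs : 0 ≤ s) (hst : s ≤ t)
    (ht : t ≤ dist a c) : dist (g s) (g t) = t - s := by
  have e1 := hg 0 s hs
  have e2 := hg t _ ht
  rw [h0] at e1
  rw [h1] at e2
  linarith [hg s t hst, dist_triangle4 a (g s) (g t) c]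

lemma exists_csg_of_dist_eq
    (hgeo : ∀ x y : X, ∃ γ : C(unitInterval, X), IsCSG γ ∧ γ 0 = x ∧ γ 1 = y) {a b c : X}
    (h : dist a c = dist a b + dist b c) :
    ∃ γ : C(unitInterval, X), IsCSG γ ∧ a ∈ range γ ∧ b ∈ range γ ∧ c ∈ range γ := by
  obtain ⟨f₁, f10, f11, hf1⟩ := exists_arclength hgeo a b
  obtain ⟨f₂, f20, f21, hf2⟩ := exists_arclength hgeo b c
  have hp : 0 ≤ dist a b := dist_nonneg
  have hq : 0 ≤ dist b c := dist_nonneg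
  obtain ⟨g, hgl, hgr⟩ : ∃ g : ℝ → X, (∀ t ≤ dist a b, g t = f₁ t) ∧
      ∀ t, dist a b ≤ t → g t = f₂ (t - dist a b) := by
    refine ⟨fun t => if t ≤ dist a b then f₁ t else f₂ (t - dist a b),
      fun t ht => if_pos ht, fun t ht => ?_⟩
    rcases ht.eq_or_lt with rfl | ht
    · simp [f11, f20]
    · exact if_neg ht.not_ge
  have hg0 : g 0 = a := by rw [hgl _ hp, f10]
  have hgp : g (dist a b) = b := by rw [hgl _ le_rfl, f11]
  have hgD : g (dist a c) = c := by
    rw [hgr _ (by linarith), h, add_sub_cancel_left, f21]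
  have hl : ∀ s t, s ≤ t → t ≤ dist a b → dist (g s) (g t) ≤ t - s := fun s t hst ht => by
    rw [hgl _ (hst.trans ht), hgl _ ht, ← abs_of_nonneg (sub_nonneg.2 hst), abs_sub_comm]
    exact hf1 s t
  have hr : ∀ s t, s ≤ t → dist a b ≤ s → dist (g s) (g t) ≤ t - s := fun s t hst hs => by
    rw [hgr _ (hs.trans hst), hgr _ hs, ← abs_of_nonneg (sub_nonneg.2 hst), abs_sub_comm]
    simpa using hf2 (s - dist a b) (t - dist a b)
  have hg : ∀ s t, s ≤ t → dist (g s) (g t) ≤ t - s := by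
    intro s t hst
    rcases le_total t (dist a b) with ht | ht
    · exact hl s t hst ht
    rcases le_total (dist a b) s with hs | hs
    · exact hr s t hst hs
    linarith [hl s _ hs le_rfl, hr _ t ht le_rfl, dist_triangle (g s) (g (dist a b)) (g t)]
  have hgc : Continuous g := by
    refine LipschitzWith.continuous (K := 1) (LipschitzWith.of_dist_le_mul fun s t => ?_)
    rw [NNReal.coe_one, one_mul, Real.dist_eq]
    rcases le_total s t with hst | hst
    · rw [abs_sub_comm, abs_of_nonneg (sub_nonneg.2 hst)]
      exact hg s t hst
    · rw [dist_comm, abs_of_nonneg (sub_nonneg.2 hst)]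
      exact hg t s hst
  let γ : C(unitInterval, X) :=
    ⟨fun t => g (t * dist a c), hgc.comp (continuous_subtype_val.mul continuous_const)⟩
  have hγ : ∀ t : unitInterval, γ t = g (t * dist a c) := fun _ => rfl
  have γ0 : γ 0 = a := by simp [hγ, hg0]
  have γ1 : γ 1 = c := by simp [hγ, hgD]
  have key : ∀ s t : unitInterval, (s : ℝ) ≤ t →
      dist (γ s) (γ t) = ((t : ℝ) - s) * dist a c := fun s t hst => by
    rw [hγ, hγ, dist_eq_of_lipschitz hg0 hgD hg (mul_nonneg s.2.1 dist_nonneg)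
      (mul_le_mul_of_nonneg_right hst dist_nonneg)
      (mul_le_of_le_one_left dist_nonneg t.2.2), sub_mul]
  refine ⟨γ, fun s t => ?_, ⟨0, γ0⟩, ?_, ⟨1, γ1⟩⟩
  · rw [γ0, γ1]
    rcases le_total (s : ℝ) t with hst | hst
    · rw [key s t hst, abs_sub_comm, abs_of_nonneg (sub_nonneg.2 hst)]
    · rw [dist_comm, key t s hst, abs_of_nonneg (sub_nonneg.2 hst)]
  · have hD : 0 ≤ dist a c := dist_nonneg
    refine ⟨⟨dist a b / dist a c, div_nonneg hp hD, div_le_one_of_le₀ (by linarith) hD⟩, ?_⟩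
    -- If `d(a, c) = 0`, the quotient is `0` by convention, which is right since `d(a, b) = 0` too.
    rw [hγ, div_mul_cancel_of_imp fun h0 => by linarith, hgp]

lemma dist_eq_of_chain {u : X → ℝ} (hu : LipschitzWith 1 u) {a b c : X}
    (hab : (a, b) ∈ Gamma u) (hbc : (b, c) ∈ Gamma u) :
    dist a c = dist a b + dist b c := by
  have h1 : u a - u b = dist a b := hab
  have h2 : u b - u c = dist b c := hbc
  have h3 := (le_abs_self _).trans (hu.dist_le_mul a c)
  rw [NNReal.coe_one, one_mul] at h3
  linarith [dist_triangle a b c]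

end Helpers

/-- For `x` in the non-branched transport set and `z, w ∈ R_u(x)`, there is a single constant
speed geodesic whose image contains `x`, `z` and `w`. -/
theorem exists_geodesic_through
    {X : Type*} [MetricSpace X] [CompleteSpace X] [SecondCountableTopology X]
    (hgeo : ∀ x y : X, ∃ γ : C(unitInterval, X), IsCSG γ ∧ γ 0 = x ∧ γ 1 = y)
    (u : X → ℝ) (hu : LipschitzWith 1 u)
    (x : X) (hx : x ∈ Tub u)
    (z w : X) (hz : (x, z) ∈ Ru u) (hw : (x, w) ∈ Ru u) :
    ∃ γ : C(unitInterval, X), IsCSG γ ∧ {x, z, w} ⊆ Set.range (fun s : unitInterval => γ s) := by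
  have main : ∀ a b c : X, (a, b) ∈ Gamma u → (b, c) ∈ Gamma u →
      ∃ γ : C(unitInterval, X), IsCSG γ ∧ a ∈ range γ ∧ b ∈ range γ ∧ c ∈ range γ :=
    fun a b c hab hbc => exists_csg_of_dist_eq hgeo (dist_eq_of_chain hu hab hbc)
  suffices H : ∃ γ : C(unitInterval, X), IsCSG γ ∧ x ∈ range γ ∧ z ∈ range γ ∧ w ∈ range γ by
    obtain ⟨γ, hγ, h1, h2, h3⟩ := H
    refine ⟨γ, hγ, ?_⟩
    rintro y (rfl | rfl | rfl)
    exacts [h1, h2, h3]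
  obtain ⟨hT, hA⟩ := hx
  rcases hz with hz | hz <;> rcases hw with hw | hw
  · have hzw : (z, w) ∈ Ru u := by
      by_contra hn
      exact hA (Or.inl ⟨hT, z, w, hz, hw, hn⟩)
    rcases hzw with hzw | hzw
    · exact main x z w hz hzw
    · obtain ⟨γ, hγ, h1, h2, h3⟩ := main x w z hw hzw
      exact ⟨γ, hγ, h1, h3, h2⟩
  · obtain ⟨γ, hγ, h1, h2, h3⟩ := main w x z hw hz
    exact ⟨γ, hγ, h2, h3, h1⟩
  · obtain ⟨γ, hγ, h1, h2, h3⟩ := main z x w hz hw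
    exact ⟨γ, hγ, h2, h1, h3⟩
  · have hzw : (z, w) ∈ Ru u := by
      by_contra hn
      exact hA (Or.inr ⟨hT, z, w, hz, hw, hn⟩)
    rcases hzw with hzw | hzw
    · obtain ⟨γ, hγ, h1, h2, h3⟩ := main z w x hzw hw
      exact ⟨γ, hγ, h3, h1, h2⟩
    · obtain ⟨γ, hγ, h1, h2, h3⟩ := main w z x hzw hz
      exact ⟨γ, hγ, h3, h2, h1⟩

end CDNote
end
end

section
/- Let (X,d) be a complete separable metric space and u : X → ℝ a 1-Lipschitz function. Then Γ_u, Γ_u⁻¹ and R_u are closed subsets of X × X, and the transport set T_u is an analytic subset of X; in particular T_u is universally measurable, hence measurable with respect to the completion of any Borel measure on X. -/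
/-!
The set `Γ_u` is the equality locus of two continuous functions, hence closed, and `Γ_u⁻¹` and `R_u`
inherit this. The transport set is the first projection of the Borel set `R_u ∩ {y ≠ x}`, hence
analytic.

Universal measurability of an analytic set `A = f(ℕ^ℕ)` is Lusin's theorem
(`nullMeasurableSet_of_analyticSet`). Given `c < μ(A)`, continuity from below of the outer measure
yields bounds `k 0, k 1, …` such that the image of `{x | ∀ i < n, x i ≤ k i}` has outer measure
above `c` for every `n`. The set `K = {x | ∀ i, x i ≤ k i}` is compact, and any open set containing
`f(K)` contains one of these images, so outer regularity gives `μ(f(K)) ≥ c`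
(`exists_compact_subset_range`). Hence `A` contains a σ-compact set of full measure in `A`.
-/

open MeasureTheory Set ENNReal

noncomputable section

namespace CDNote

/-- A continuous image of Baire space is inner regular for compact sets: the coordinates are bounded
one at a time, each time losing so little outer measure that it stays above `c`. -/
lemma exists_compact_subset_range {X : Type*} [TopologicalSpace X] [MeasurableSpace X]
    (μ : Measure X) [μ.OuterRegular] (f : (ℕ → ℕ) → X) (hf : Continuous f)
    (c : ℝ≥0∞) (hc : c < μ (range f)) :
    ∃ K : Set X, IsCompact K ∧ K ⊆ range f ∧ c ≤ μ K := by
  -- Continuity from below holds for arbitrary, possibly non-measurable, increasing unions.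
  have step : ∀ (B : {B : Set (ℕ → ℕ) // c < μ (f '' B)}) (n : ℕ),
      ∃ m : ℕ, c < μ (f '' (B.1 ∩ {x | x n ≤ m})) := by
    rintro ⟨B, hB⟩ n
    have hmono : Monotone fun m : ℕ => f '' (B ∩ {x | x n ≤ m}) := by
      intro a b hab
      exact image_mono (inter_subset_inter_right _ fun x (hx : x n ≤ a) => hx.trans hab)
    have hU : f '' B = ⋃ m : ℕ, f '' (B ∩ {x | x n ≤ m}) := by
      rw [← image_iUnion, ← inter_iUnion]
      congr 1
      ext x
      simp only [mem_inter_iff, mem_iUnion, mem_ofPred_eq]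
      exact ⟨fun h => ⟨h, x n, le_rfl⟩, fun h => h.1⟩
    rw [hU, hmono.measure_iUnion] at hB
    exact lt_iSup_iff.1 hB
  choose g hg using step
  let B : ℕ → {B : Set (ℕ → ℕ) // c < μ (f '' B)} := fun n =>
    Nat.rec ⟨univ, by rwa [image_univ]⟩ (fun n B => ⟨B.1 ∩ {x | x n ≤ g B n}, hg B n⟩) n
  let k : ℕ → ℕ := fun n => g (B n) n
  have hB : ∀ n, (B n).1 = {x | ∀ i < n, x i ≤ k i} := by
    intro n
    induction n with
    | zero => simp [B]
    | succ n ih =>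
      have h : (B (n + 1)).1 = (B n).1 ∩ {x | x n ≤ k n} := rfl
      rw [h, ih]
      ext x
      simp only [mem_inter_iff, mem_ofPred_eq, Nat.lt_succ_iff_lt_or_eq]
      constructor
      · rintro ⟨h1, h2⟩ i (hi | rfl)
        exacts [h1 i hi, h2]
      · exact fun h => ⟨fun i hi => h i (Or.inl hi), h n (Or.inr rfl)⟩
  let K : Set (ℕ → ℕ) := pi univ fun i => Iic (k i)
  have hK : IsCompact K := isCompact_univ_pi fun i => (finite_Iic (k i)).isCompact
  refine ⟨f '' K, hK.image hf, image_subset_range _ _, ?_⟩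
  rw [(f '' K).measure_eq_iInf_isOpen μ]
  refine le_iInf₂ fun U hKU => le_iInf fun hU => ?_
  -- By compactness, an open set containing `K` already contains some `B n`.
  obtain ⟨n, hn⟩ : ∃ n, (B n).1 ⊆ f ⁻¹' U := by
    by_contra! hcon
    simp only [not_subset] at hcon
    choose x hxB hxU using hcon
    let y : ℕ → ℕ → ℕ := fun n i => min (x n i) (k i)
    obtain ⟨z, hz, φ, hφ, hlim⟩ := hK.tendsto_subseq (x := y) fun n i _ =>
      mem_Iic.2 (min_le_right (x n i) (k i))
    have hlim' : Filter.Tendsto (x ∘ φ) Filter.atTop (nhds z) := by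
      rw [tendsto_pi_nhds] at hlim ⊢
      intro i
      refine (hlim i).congr' ?_
      filter_upwards [Filter.eventually_gt_atTop i] with m hm
      have h := hxB (φ m)
      rw [hB] at h
      exact min_eq_left (h i (hm.trans_le (hφ.id_le m)))
    have hzU : f ⁻¹' U ∈ nhds z :=
      (hU.preimage hf).mem_nhds (hKU (mem_image_of_mem f hz))
    obtain ⟨m, hm⟩ := (hlim'.eventually hzU).exists
    exact hxU _ hm
  exact (B n).2.le.trans (measure_mono (image_subset_iff.2 hn))

/-- Lusin: an analytic set agrees up to a null set with a σ-compact subset. Outer regularity is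
automatic for a finite Borel measure on a metric space. -/
lemma nullMeasurableSet_of_analyticSet {X : Type*} [TopologicalSpace X] [T2Space X]
    [MeasurableSpace X] [BorelSpace X] (μ : Measure X) [IsFiniteMeasure μ] [μ.OuterRegular]
    {A : Set X} (hA : AnalyticSet A) : NullMeasurableSet A μ := by
  rw [AnalyticSet] at hA
  obtain rfl | ⟨f, hf, rfl⟩ := hA
  · exact MeasurableSet.empty.nullMeasurableSet
  rcases eq_or_ne (μ (range f)) 0 with h0 | h0
  · exact NullMeasurableSet.of_null h0
  obtain ⟨c, -, hc, hlim⟩ := exists_seq_strictMono_tendsto' (pos_iff_ne_zero.2 h0)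
  choose K hK hKA hcK using fun n => exists_compact_subset_range μ f hf (c n) (hc n).2
  have hm : NullMeasurableSet (⋃ n, K n) μ :=
    (MeasurableSet.iUnion fun n => (hK n).measurableSet).nullMeasurableSet
  have hle : μ (range f) ≤ μ (⋃ n, K n) :=
    le_of_tendsto' hlim fun n => (hcK n).trans (measure_mono (subset_iUnion K n))
  exact hm.congr (ae_eq_of_subset_of_measure_ge (iUnion_subset hKA) hle hm (measure_ne_top _ _))

/-- `Γ_u`, `Γ_u⁻¹` and `R_u` are closed, and the transport set `T_u` is analytic, hence
universally measurable (measurable for the completion of every Borel measure). -/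
theorem gamma_closed_transportSet_analyticSet
    {X : Type*} [MetricSpace X] [CompleteSpace X] [SecondCountableTopology X]
    [MeasurableSpace X] [BorelSpace X]
    (u : X → ℝ) (hu : LipschitzWith 1 u) :
    IsClosed (Gamma u) ∧ IsClosed (GammaInv u) ∧ IsClosed (Ru u) ∧
    MeasureTheory.AnalyticSet (Tu u) ∧
    (∀ μ : Measure X, IsFiniteMeasure μ → NullMeasurableSet (Tu u) μ) := by
  have hc := hu.continuous
  have h1 : IsClosed (Gamma u) :=
    isClosed_eq ((hc.comp continuous_fst).sub (hc.comp continuous_snd)) continuous_dist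
  have h2 : IsClosed (GammaInv u) := h1.preimage continuous_swap
  have h3 : IsClosed (Ru u) := h1.union h2
  have h4 : AnalyticSet (Tu u) := by
    have hne : IsOpen {p : X × X | p.2 ≠ p.1} := isOpen_ne_fun continuous_snd continuous_fst
    have hT : Tu u = Prod.fst '' (Ru u ∩ {p : X × X | p.2 ≠ p.1}) := by
      ext x
      simp [Tu]
    rw [hT]
    exact (h3.measurableSet.inter hne.measurableSet).analyticSet.image_of_continuous continuous_fst
  exact ⟨h1, h2, h3, h4, fun μ _ => nullMeasurableSet_of_analyticSet μ h4⟩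

end CDNote
end
end

section
/- Let K ∈ ℝ, N > 1, L > 0 and let h : [0,L] → (0,∞) be continuous. Then the following are equivalent: (i) for every nonnegative φ ∈ C_c^∞((0,L)) one has ∫_0^L h(x)^{1/(N−1)} φ''(x) dx + (K/(N−1)) ∫_0^L h(x)^{1/(N−1)} φ(x) dx ≤ 0 (i.e. (h^{1/(N−1)})'' + (K/(N−1)) h^{1/(N−1)} ≤ 0 in the distributional sense); (ii) for all 0 ≤ R0 ≤ R1 ≤ L and all t ∈ [0,1], h((1−t)R0 + tR1)^{1/(N−1)} ≥ σ^{(1−t)}_{K,N−1}(R1−R0)·h(R0)^{1/(N−1)} + σ^{(t)}_{K,N−1}(R1−R0)·h(R1)^{1/(N−1)}, the inequality being understood in [0,+∞] (so it fails whenever a coefficient σ is +∞ and the corresponding h-value is positive). -/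
/-!
Write `f = h^{1/(N-1)}`, `κ = K/(N-1)`, and let `s`, `c` be the generalized sine and cosine of
curvature `κ`. For `R0 < R1` with `κ (R1 - R0)² < π²`, the `σ`-inequality at `x` is
`s(b - x) f(a) + s(x - a) f(b) ≤ s(b - a) f(x)` with `a = R0`, `b = R1`.

From distributional to pointwise: mollifications of `f` satisfy `g'' + κ g ≤ 0` classically, and
monotonicity of two Wronskians (`smooth_comparison`) gives the displayed inequality for `g`. It
passes to the limit, up to the boundary (`Weak.closed`), and also holds when `κ (b - a)² = π²`. In
that case `s(b - a) = 0` while the left side is positive for `a < x < b`, so `κ L² < π²` is forced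
and no infinite coefficient occurs.

From pointwise to distributional: the case `t = 1/2` reads `f(x - δ) + f(x + δ) ≤ 2 c(δ) f(x)`.
Integrated against `φ ≥ 0`, it says that a smooth function of `δ` vanishing at `0` has a local
maximum there; its second derivative at `0` is twice the distributional expression
(`weak_of_midpoint`).
-/

open MeasureTheory Set ENNReal

noncomputable section

namespace CDNote

/-- `s` and `c` are the generalized sine and cosine of curvature `κ`: the solutions of
`u'' + κ u = 0` with initial data `(0, 1)` and `(1, 0)` respectively. -/
structure GenTrig (κ : ℝ) (s c : ℝ → ℝ) : Prop where
  hs : ∀ x, HasDerivAt s (c x) x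
  hc : ∀ x, HasDerivAt c (-κ * s x) x
  s0 : s 0 = 0
  c0 : c 0 = 1
  add : ∀ x y, s (x + y) = s x * c y + c x * s y
  even : ∀ x, c (-x) = c x
  pos : ∀ x, 0 < x → κ * x ^ 2 < Real.pi ^ 2 → 0 < s x
  zero : ∀ x, 0 ≤ x → κ * x ^ 2 = Real.pi ^ 2 → s x = 0

/-- The generalized sine exists for every curvature, and the finite distortion coefficients at
`θ > 0` are its quotients. -/
lemma exists_genTrig (K M : ℝ) (hM : 0 < M) : ∃ s c : ℝ → ℝ, GenTrig (K / M) s c ∧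
    ∀ t θ, 0 < θ → K / M * θ ^ 2 < Real.pi ^ 2 →
      sigmaCoef K M t θ = ENNReal.ofReal (s (t * θ) / s θ) := by
  have hfin : ∀ θ : ℝ, K / M * θ ^ 2 < Real.pi ^ 2 → ¬ (M * Real.pi ^ 2 ≤ K * θ ^ 2) := by
    intro θ h
    rw [div_mul_eq_mul_div, div_lt_iff₀ hM] at h
    linarith
  rcases lt_trichotomy K 0 with hK | hK | hK
  · have hκ : 0 < -K / M := div_pos (by linarith) hM
    set w := Real.sqrt (-K / M) with hw
    have hw0 : 0 < w := Real.sqrt_pos.2 hκ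
    have hww : w * w = -K / M := Real.mul_self_sqrt hκ.le
    have hK' : K / M = -(w * w) := by rw [hww]; ring
    have hid : ∀ x, HasDerivAt (fun x : ℝ => w * x) w x := fun x => by
      simpa using (hasDerivAt_id x).const_mul w
    refine ⟨fun x => Real.sinh (w * x) / w, fun x => Real.cosh (w * x),
      ⟨fun x => ?_, fun x => ?_, by simp, by simp, fun x y => ?_, fun x => ?_,
        fun x hx _ => ?_, fun x hx h => ?_⟩, fun t θ hθ hlt => ?_⟩
    · have := ((hid x).sinh).div_const w
      rwa [mul_div_assoc, div_self hw0.ne', mul_one] at this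
    · have := (hid x).cosh
      convert this using 1
      rw [hK']; field_simp
    · simp only [mul_add, Real.sinh_add]; ring
    · simp
    · exact div_pos (Real.sinh_pos_iff.2 (by positivity)) hw0
    · have h1 := Real.pi_pos
      rw [hK'] at h
      nlinarith [sq_nonneg (w * x), pow_pos h1 2]
    · have h2 : K * θ ^ 2 < 0 := mul_neg_of_neg_of_pos hK (by positivity)
      rw [sigmaCoef, if_neg (hfin θ hlt), if_neg (by linarith), if_neg (by linarith)]
      congr 1
      rw [div_div_div_cancel_right₀ hw0.ne', mul_comm w, mul_comm w]
  · subst hK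
    refine ⟨fun x => x, fun _ => 1,
      ⟨fun x => hasDerivAt_id x, fun x => by simpa using hasDerivAt_const x (1:ℝ), rfl, rfl,
        fun x y => by ring, fun _ => rfl, fun x hx _ => hx, fun x hx h => ?_⟩,
        fun t θ hθ hlt => ?_⟩
    · have h1 := Real.pi_pos
      simp at h
      exact absurd h.symm (pow_pos h1 2).ne'
    · rw [sigmaCoef, if_neg (hfin θ hlt), if_neg (by simp), if_pos (by simp),
        mul_div_cancel_right₀ _ hθ.ne']
  · have hκ : 0 < K / M := div_pos hK hM
    set w := Real.sqrt (K / M) with hw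
    have hw0 : 0 < w := Real.sqrt_pos.2 hκ
    have hK' : K / M = w * w := (Real.mul_self_sqrt hκ.le).symm
    have hid : ∀ x, HasDerivAt (fun x : ℝ => w * x) w x := fun x => by
      simpa using (hasDerivAt_id x).const_mul w
    refine ⟨fun x => Real.sin (w * x) / w, fun x => Real.cos (w * x),
      ⟨fun x => ?_, fun x => ?_, by simp, by simp, fun x y => ?_, fun x => ?_,
        fun x hx h => ?_, fun x hx h => ?_⟩, fun t θ hθ hlt => ?_⟩
    · have := ((hid x).sin).div_const w
      rwa [mul_div_assoc, div_self hw0.ne', mul_one] at this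
    · have := (hid x).cos
      convert this using 1
      rw [hK']; field_simp
    · simp only [mul_add, Real.sin_add]; ring
    · simp
    · refine div_pos (Real.sin_pos_of_pos_of_lt_pi (by positivity) ?_) hw0
      rw [hK'] at h
      exact lt_of_pow_lt_pow_left₀ 2 Real.pi_pos.le (by linarith)
    · rw [hK'] at h
      have : w * x = Real.pi :=
        (pow_left_inj₀ (by positivity) Real.pi_pos.le two_ne_zero).1 (by linarith)
      simp [this]
    · have h2 : 0 < K * θ ^ 2 := by positivity
      rw [sigmaCoef, if_neg (hfin θ hlt), if_pos h2]
      congr 1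
      rw [div_div_div_cancel_right₀ hw0.ne', mul_comm w, mul_comm w]

lemma GenTrig.nonneg {κ : ℝ} {s c : ℝ → ℝ} (hT : GenTrig κ s c) {d x : ℝ}
    (hd : κ * d ^ 2 ≤ Real.pi ^ 2) (hx : 0 ≤ x) (hxd : x ≤ d) : 0 ≤ s x := by
  rcases hx.eq_or_lt with rfl | hx'
  · exact hT.s0.ge
  have h1 : κ * x ^ 2 ≤ Real.pi ^ 2 := by
    rcases le_total κ 0 with hk | hk
    · nlinarith [sq_nonneg Real.pi, sq_nonneg x]
    · exact le_trans (by gcongr) hd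
  rcases h1.eq_or_lt with h1 | h1
  · exact (hT.zero x hx h1).ge
  · exact (hT.pos x hx' h1).le

/-- Sturm comparison for twice differentiable `g` with `g'' + κ g ≤ 0` on `[a, b]`. The Wronskians
`s(y - a) g' - c(y - a) g` on `[a, x]` and `s(b - y) g' + c(b - y) g` on `[x, b]` are nonincreasing;
a positive combination of the two estimates eliminates `g' x`. -/
lemma smooth_comparison {κ : ℝ} {s c : ℝ → ℝ} (hT : GenTrig κ s c) {g g' g'' : ℝ → ℝ}
    (hg : ∀ x, HasDerivAt g (g' x) x) (hg' : ∀ x, HasDerivAt g' (g'' x) x) {a b x : ℝ}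
    (hax : a ≤ x) (hxb : x ≤ b) (hd : κ * (b - a) ^ 2 ≤ Real.pi ^ 2)
    (hle : ∀ y ∈ Icc a b, g'' y + κ * g y ≤ 0) :
    s (b - x) * g a + s (x - a) * g b ≤ s (b - a) * g x := by
  have hW : ∀ y, HasDerivAt (fun y => s (y - a) * g' y - c (y - a) * g y)
      (s (y - a) * (g'' y + κ * g y)) y := by
    intro y
    have e1 := (hT.hs (y - a)).comp_sub_const y a
    have e2 := (hT.hc (y - a)).comp_sub_const y a
    refine ((e1.mul (hg' y)).sub (e2.mul (hg y))).congr_deriv ?_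
    ring
  have hV : ∀ y, HasDerivAt (fun y => s (b - y) * g' y + c (b - y) * g y)
      (s (b - y) * (g'' y + κ * g y)) y := by
    intro y
    have e1 := (hT.hs (b - y)).comp_const_sub b y
    have e2 := (hT.hc (b - y)).comp_const_sub b y
    refine ((e1.mul (hg' y)).add (e2.mul (hg y))).congr_deriv ?_
    ring
  have A1 : AntitoneOn (fun y => s (y - a) * g' y - c (y - a) * g y) (Icc a b) := by
    apply antitoneOn_of_deriv_nonpos (convex_Icc a b)
      (fun y _ => (hW y).continuousAt.continuousWithinAt)
      (fun y _ => (hW y).differentiableAt.differentiableWithinAt)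
    intro y hy
    rw [interior_Icc] at hy
    rw [(hW y).deriv]
    exact mul_nonpos_of_nonneg_of_nonpos
      (hT.nonneg hd (by linarith [hy.1]) (by linarith [hy.2])) (hle y ⟨hy.1.le, hy.2.le⟩)
  have A2 : AntitoneOn (fun y => s (b - y) * g' y + c (b - y) * g y) (Icc a b) := by
    apply antitoneOn_of_deriv_nonpos (convex_Icc a b)
      (fun y _ => (hV y).continuousAt.continuousWithinAt)
      (fun y _ => (hV y).differentiableAt.differentiableWithinAt)
    intro y hy
    rw [interior_Icc] at hy
    rw [(hV y).deriv]
    exact mul_nonpos_of_nonneg_of_nonpos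
      (hT.nonneg hd (by linarith [hy.2]) (by linarith [hy.1])) (hle y ⟨hy.1.le, hy.2.le⟩)
  have hab : a ≤ b := hax.trans hxb
  have B1 := A1 (left_mem_Icc.2 hab) ⟨hax, hxb⟩ hax
  have B2 := A2 ⟨hax, hxb⟩ (right_mem_Icc.2 hab) hxb
  simp only [sub_self, hT.s0, hT.c0] at B1 B2
  have p1 : 0 ≤ s (b - x) := hT.nonneg hd (by linarith) (by linarith)
  have p2 : 0 ≤ s (x - a) := hT.nonneg hd (by linarith) (by linarith)
  have hadd := hT.add (b - x) (x - a)
  rw [show b - x + (x - a) = b - a by ring] at hadd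
  rw [hadd]
  nlinarith [mul_le_mul_of_nonneg_left B1 p1, mul_le_mul_of_nonneg_left B2 p2]

/-- The convolution `F ∗ ψ` on the real line. -/
def conv (F ψ : ℝ → ℝ) (y : ℝ) : ℝ := ∫ t, F t * ψ (y - t)

lemma hasDerivAt_conv {F ψ : ℝ → ℝ} (hF : Continuous F) (hψ : ContDiff ℝ (⊤ : ℕ∞) ψ)
    (hc : HasCompactSupport ψ) (y : ℝ) : HasDerivAt (conv F ψ) (conv F (deriv ψ) y) y :=
  HasCompactSupport.hasDerivAt_convolution_right (ContinuousLinearMap.mul ℝ ℝ) (μ := volume)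
    hF.locallyIntegrable hc (hψ.of_le (by exact_mod_cast le_top)) y

lemma contDiff_deriv {ψ : ℝ → ℝ} (hψ : ContDiff ℝ (⊤ : ℕ∞) ψ) :
    ContDiff ℝ (⊤ : ℕ∞) (deriv ψ) := (contDiff_infty_iff_deriv.1 hψ).2

lemma deriv2_const_sub (ψ : ℝ → ℝ) (y : ℝ) :
    deriv (deriv fun x => ψ (y - x)) = fun x => deriv (deriv ψ) (y - x) := by
  have h1 : ∀ χ : ℝ → ℝ, deriv (fun x => χ (y - x)) = fun x => - deriv χ (y - x) :=
    fun χ => funext fun x => deriv_comp_const_sub ..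
  rw [h1]
  funext x
  rw [deriv.fun_neg, h1 (deriv ψ), neg_neg]

/-- `F'' + κ F ≤ 0` on `(0, L)` in the sense of distributions. -/
def Weak (κ L : ℝ) (F : ℝ → ℝ) : Prop :=
  ∀ φ : ℝ → ℝ, ContDiff ℝ (⊤ : ℕ∞) φ → HasCompactSupport φ → tsupport φ ⊆ Ioo 0 L →
    (∀ x, 0 ≤ φ x) → (∫ x, F x * deriv (deriv φ) x) + κ * ∫ x, F x * φ x ≤ 0

/-- Testing against translates of a mollifier shows that mollifications of `F` are smooth
supersolutions away from the boundary; the comparison passes to the limit. -/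
lemma Weak.interior {κ L : ℝ} {F s c : ℝ → ℝ} (hT : GenTrig κ s c) (hF : Continuous F)
    (hw : Weak κ L F) {a b x : ℝ} (ha : 0 < a) (hax : a ≤ x) (hxb : x ≤ b) (hb : b < L)
    (hd : κ * (b - a) ^ 2 ≤ Real.pi ^ 2) :
    s (b - x) * F a + s (x - a) * F b ≤ s (b - a) * F x := by
  let ρ : ℕ → ContDiffBump (0 : ℝ) := fun n =>
    ⟨1 / ((n : ℝ) + 2), 1 / ((n : ℝ) + 1), by positivity,
      one_div_lt_one_div_of_lt (by positivity) (by linarith)⟩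
  have hρ : Filter.Tendsto (fun n => (ρ n).rOut) Filter.atTop (nhds 0) :=
    tendsto_one_div_add_atTop_nhds_zero_nat
  have hlim : ∀ y, Filter.Tendsto (fun n => conv F ((ρ n).normed volume) y)
      Filter.atTop (nhds (F y)) := by
    intro y
    refine (ContDiffBump.convolution_tendsto_right_of_continuous (μ := volume) hρ hF y).congr
      fun n => ?_
    rw [convolution_lsmul_swap]
    simp only [conv, smul_eq_mul, mul_comm]
  have hsmall : ∀ᶠ n in Filter.atTop, (ρ n).rOut < min a (L - b) :=
    hρ.eventually_lt_const (lt_min ha (by linarith))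
  refine le_of_tendsto_of_tendsto (((hlim a).const_mul _).add ((hlim b).const_mul _))
    ((hlim x).const_mul _) ?_
  filter_upwards [hsmall] with n hn
  have hn1 := hn.trans_le (min_le_left _ _)
  have hn2 := hn.trans_le (min_le_right _ _)
  set ψ := (ρ n).normed volume with hψ
  have c1 : ContDiff ℝ (⊤ : ℕ∞) ψ := (ρ n).contDiff_normed
  have c2 : HasCompactSupport ψ := (ρ n).hasCompactSupport_normed
  refine smooth_comparison hT (hasDerivAt_conv hF c1 c2)
    (hasDerivAt_conv hF (contDiff_deriv c1) c2.deriv) hax hxb hd fun y hy => ?_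
  have hts : tsupport (fun x => ψ (y - x)) ⊆ Metric.closedBall y (ρ n).rOut := by
    refine closure_minimal (fun z hz => ?_) Metric.isClosed_closedBall
    have : y - z ∈ Function.support ψ := hz
    rw [hψ, ContDiffBump.support_normed_eq, mem_ball_zero_iff] at this
    rw [mem_closedBall_iff_norm']
    exact this.le
  have := hw (fun x => ψ (y - x)) (c1.comp (contDiff_const.sub contDiff_id))
    (IsCompact.of_isClosed_subset (isCompact_closedBall _ _) (isClosed_tsupport _) hts)
    (hts.trans fun z hz => by
      rw [Real.closedBall_eq_Icc] at hz
      exact ⟨by linarith [hz.1, hy.1], by linarith [hz.2, hy.2]⟩)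
    (fun x => (ρ n).nonneg_normed _)
  rw [deriv2_const_sub] at this
  exact this

/-- The comparison inequality up to the boundary, obtained by contracting the three points towards
the midpoint of `[0, L]`. -/
lemma Weak.closed {κ L : ℝ} {F s c : ℝ → ℝ} (hT : GenTrig κ s c) (hF : Continuous F)
    (hw : Weak κ L F) {a b x : ℝ} (hL : 0 < L) (ha : 0 ≤ a) (hax : a ≤ x) (hxb : x ≤ b)
    (hb : b ≤ L) (hd : κ * (b - a) ^ 2 ≤ Real.pi ^ 2) :
    s (b - x) * F a + s (x - a) * F b ≤ s (b - a) * F x := by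
  let p : ℝ → ℝ → ℝ := fun ε y => (1 - ε) * y + ε * (L / 2)
  have hp : ∀ y, Filter.Tendsto (fun ε => p ε y) (nhdsWithin 0 (Ioi 0)) (nhds y) := by
    intro y
    have : Continuous fun ε => p ε y := by fun_prop
    have h := (this.tendsto 0).mono_left (nhdsWithin_le_nhds (s := Ioi 0))
    simpa [p] using h
  have hsc : Continuous s := continuous_iff_continuousAt.2 fun x => (hT.hs x).continuousAt
  have hS : ∀ y z, Filter.Tendsto (fun ε => s (p ε y - p ε z)) (nhdsWithin 0 (Ioi 0))
      (nhds (s (y - z))) := fun y z => (hsc.tendsto _).comp ((hp y).sub (hp z))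
  have hFt : ∀ y, Filter.Tendsto (fun ε => F (p ε y)) (nhdsWithin 0 (Ioi 0)) (nhds (F y)) :=
    fun y => (hF.tendsto _).comp (hp y)
  refine le_of_tendsto_of_tendsto (((hS b x).mul (hFt a)).add ((hS x a).mul (hFt b)))
    ((hS b a).mul (hFt x)) ?_
  filter_upwards [Ioo_mem_nhdsGT (zero_lt_one' ℝ)] with ε hε
  have e1 : 0 < 1 - ε := by linarith [hε.2]
  have e0 := hε.1
  refine hw.interior hT hF (show 0 < (1 - ε) * a + ε * (L / 2) by positivity)
    (by dsimp only [p]; gcongr) (by dsimp only [p]; gcongr)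
    (show (1 - ε) * b + ε * (L / 2) < L by nlinarith) ?_
  have : p ε b - p ε a = (1 - ε) * (b - a) := by simp only [p]; ring
  rw [this]
  rcases le_total κ 0 with hk | hk
  · nlinarith [sq_nonneg Real.pi, sq_nonneg ((1 - ε) * (b - a))]
  · refine le_trans ?_ hd
    have : (1 - ε) * (b - a) ≤ b - a := by nlinarith
    have : 0 ≤ (1 - ε) * (b - a) := mul_nonneg e1.le (by linarith)
    gcongr

/-- Converse: if the symmetric midpoint inequality `F(x - δ) + F(x + δ) ≤ 2 c(δ) F(x)` holds, then
`F` is a distributional supersolution. With `J` the correlation of `F` and `φ`, the function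
`D δ = J δ + J (-δ) - 2 c(δ) J 0` has a local maximum at `0`, and `D'' 0 ≤ 0` is the claim. -/
lemma weak_of_midpoint {κ L : ℝ} {F s c : ℝ → ℝ} (hT : GenTrig κ s c) (hF : Continuous F)
    (hmid : ∃ δ₀ > 0, ∀ x δ, 0 < δ → δ < δ₀ → 0 ≤ x - δ → x + δ ≤ L →
      F (x - δ) + F (x + δ) ≤ 2 * c δ * F x) : Weak κ L F := by
  intro φ hφ hφc hφs hφ0
  obtain ⟨δ₀, hδ₀, hmid⟩ := hmid
  -- a uniform margin between the support of `φ` and the boundary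
  obtain ⟨η, hη, hηs⟩ : ∃ η > 0, ∀ x, φ x ≠ 0 → η ≤ x ∧ x ≤ L - η := by
    obtain ⟨η, hη, hsub⟩ := IsCompact.exists_cthickening_subset_open hφc isOpen_Ioo hφs
    refine ⟨η, hη, fun x hx => ?_⟩
    have hx' : x ∈ tsupport φ := subset_tsupport φ hx
    have h1 : ∀ z, |z - x| ≤ η → z ∈ Ioo 0 L := fun z hz =>
      hsub (Metric.mem_cthickening_of_dist_le z x η _ hx' (by rwa [Real.dist_eq]))
    have h2 := (h1 (x - η) (by simp [abs_of_pos hη])).1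
    have h3 := (h1 (x + η) (by simp [abs_of_pos hη])).2
    exact ⟨by linarith, by linarith⟩
  set ψ : ℝ → ℝ := fun u => φ (0 - u) with hψ
  have c1 : ContDiff ℝ (⊤ : ℕ∞) ψ := hφ.comp (contDiff_const.sub contDiff_id)
  have c2 : HasCompactSupport ψ := hφc.comp_homeomorph (Homeomorph.subLeft 0)
  set J := conv F ψ with hJ
  have hJ0 : J 0 = ∫ x, F x * φ x := by simp [J, conv, ψ]
  have hJ2 : conv F (deriv (deriv ψ)) 0 = ∫ x, F x * deriv (deriv φ) x := by
    rw [hψ, deriv2_const_sub]; simp [conv]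
  rw [← hJ0, ← hJ2]
  have d1 := hasDerivAt_conv hF c1 c2
  have d2 := hasDerivAt_conv hF (contDiff_deriv c1) c2.deriv
  have hshift : ∀ δ, J δ = ∫ x, F (x + δ) * φ x := by
    intro δ
    rw [hJ, conv, ← integral_add_right_eq_self _ δ]
    simp [ψ]
  have hint : ∀ δ, Integrable fun x => F (x + δ) * φ x := fun δ =>
    ((hF.comp (continuous_add_const δ)).mul hφ.continuous).integrable_of_hasCompactSupport
      hφc.mul_left
  set D : ℝ → ℝ := fun δ => J δ + J (-δ) - 2 * c δ * J 0 with hD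
  have hD0 : D 0 = 0 := by simp [D, hT.c0]; ring
  have hDpos : ∀ δ, 0 < δ → δ < min δ₀ η → D δ ≤ 0 := by
    intro δ h0 hδ
    have hδ1 := hδ.trans_le (min_le_left _ _)
    have hδ2 := hδ.trans_le (min_le_right _ _)
    have hi0 := hint 0
    simp only [add_zero] at hi0
    have key : (∫ x, (F (x + δ) * φ x + F (x + -δ) * φ x)) ≤
        ∫ x, (2 * c δ) * (F x * φ x) := by
      refine integral_mono ((hint δ).add (hint (-δ))) (hi0.const_mul _) fun x => ?_
      by_cases hx : φ x = 0
      · simp [hx]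
      obtain ⟨h1, h2⟩ := hηs x hx
      have := mul_le_mul_of_nonneg_right
        (hmid x δ h0 hδ1 (by linarith) (by linarith)) (hφ0 x)
      rw [sub_eq_add_neg] at this
      dsimp only
      linarith
    rw [integral_add (hint δ) (hint (-δ)), ← hshift, ← hshift, integral_const_mul, ← hJ0] at key
    simp only [D]; linarith
  have hDle : ∀ᶠ δ in nhds 0, D δ ≤ 0 := by
    have hm : 0 < min δ₀ η := lt_min hδ₀ hη
    filter_upwards [Metric.ball_mem_nhds (0:ℝ) hm] with δ hδ
    rw [mem_ball_zero_iff, Real.norm_eq_abs, abs_lt] at hδ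
    rcases lt_trichotomy δ 0 with h | h | h
    · have := hDpos (-δ) (by linarith) (by linarith [hδ.1])
      simp only [D, neg_neg, hT.even] at this ⊢
      linarith
    · rw [h, hD0]
    · exact hDpos δ h hδ.2
  have D1 : ∀ δ, HasDerivAt D
      (conv F (deriv ψ) δ - conv F (deriv ψ) (-δ) - 2 * (-κ * s δ) * J 0) δ := by
    intro δ
    have e := (d1 (-δ)).comp δ (hasDerivAt_neg δ)
    refine (((d1 δ).add e).sub (((hT.hc δ).const_mul 2).mul_const (J 0))).congr_deriv ?_
    ring
  have D1' : deriv D = fun δ =>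
      conv F (deriv ψ) δ - conv F (deriv ψ) (-δ) - 2 * (-κ * s δ) * J 0 :=
    funext fun δ => (D1 δ).deriv
  have D2 : deriv (deriv D) 0 = 2 * (conv F (deriv (deriv ψ)) 0 + κ * J 0) := by
    rw [D1']
    have e := (d2 (-0)).comp 0 (hasDerivAt_neg (0:ℝ))
    have := ((d2 0).sub e).sub ((((hT.hs 0).const_mul (-κ)).const_mul 2).mul_const (J 0))
    refine this.deriv.trans ?_
    rw [hT.c0, neg_zero]; ring
  by_contra! hcon
  have hmin : IsLocalMin D 0 := isLocalMin_of_deriv_deriv_pos (by rw [D2]; linarith)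
    (by rw [D1']; simp [hT.s0]) (D1 0).continuousAt
  have hz : D =ᶠ[nhds 0] fun _ => 0 := by
    filter_upwards [hmin, hDle] with δ h1 h2
    rw [hD0] at h1
    exact le_antisymm h2 h1
  have : deriv (deriv D) 0 = 0 := by
    rw [hz.deriv.deriv_eq]; simp
  linarith

/-- A test function supported in `(0, L)` only sees the values of the density there. -/
lemma setIntegral_eq {L : ℝ} {f F ψ : ℝ → ℝ} (hfF : ∀ x ∈ Icc 0 L, F x = f x)
    (hψ : tsupport ψ ⊆ Ioo 0 L) :
    ∫ x in Ioo 0 L, f x * ψ x = ∫ x, F x * ψ x := by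
  rw [← setIntegral_eq_integral_of_forall_compl_eq_zero (s := Ioo 0 L)
    (f := fun x => F x * ψ x)]
  · exact setIntegral_congr_fun measurableSet_Ioo fun x hx => by
      simp only [hfF x (Ioo_subset_Icc_self hx)]
  · intro x hx
    rw [image_eq_zero_of_notMem_tsupport fun h => hx (hψ h), mul_zero]

/-- **Remark 2.9.** For a continuous positive density `h` on `[0,L]`, the distributional
inequality `(h^{1/(N-1)})'' + (K/(N-1)) h^{1/(N-1)} ≤ 0` is equivalent to the pointwise
`σ`-concavity of `h^{1/(N-1)}` (the inequality understood in `[0,∞]`). -/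
theorem distributional_iff_sigma_concavity
    (K N L : ℝ) (hN : 1 < N) (hL : 0 < L)
    (h : ℝ → ℝ) (hcont : ContinuousOn h (Icc 0 L)) (hpos : ∀ x ∈ Icc (0:ℝ) L, 0 < h x) :
    (∀ φ : ℝ → ℝ, ContDiff ℝ (⊤ : ℕ∞) φ → HasCompactSupport φ → tsupport φ ⊆ Ioo 0 L →
      (∀ x, 0 ≤ φ x) →
      (∫ x in Ioo (0:ℝ) L, h x ^ (1 / (N - 1)) * deriv (deriv φ) x)
        + (K / (N - 1)) * ∫ x in Ioo (0:ℝ) L, h x ^ (1 / (N - 1)) * φ x ≤ 0)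
    ↔
    (∀ R0 R1 : ℝ, 0 ≤ R0 → R0 ≤ R1 → R1 ≤ L → ∀ t ∈ Icc (0:ℝ) 1,
      sigmaCoef K (N - 1) (1 - t) (R1 - R0) * ENNReal.ofReal (h R0 ^ (1 / (N - 1)))
        + sigmaCoef K (N - 1) t (R1 - R0) * ENNReal.ofReal (h R1 ^ (1 / (N - 1)))
        ≤ ENNReal.ofReal (h ((1 - t) * R0 + t * R1) ^ (1 / (N - 1)))) := by
  have hM : 0 < N - 1 := by linarith
  obtain ⟨s, c, hT, hσ⟩ := exists_genTrig K (N - 1) hM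
  set κ := K / (N - 1) with hκ
  set f : ℝ → ℝ := fun x => h x ^ (1 / (N - 1)) with hf
  have hfc : ContinuousOn f (Icc 0 L) := hcont.rpow_const fun x hx => Or.inl (hpos x hx).ne'
  have hfpos : ∀ x ∈ Icc (0:ℝ) L, 0 < f x := fun x hx => Real.rpow_pos_of_pos (hpos x hx) _
  -- the continuous extension of `f` by its boundary values
  set F : ℝ → ℝ := fun x => f (max 0 (min x L)) with hFdef
  have hF : Continuous F := hfc.comp_continuous (by fun_prop) fun x =>
    ⟨le_max_left _ _, max_le hL.le (min_le_right _ _)⟩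
  have hFf : ∀ x ∈ Icc 0 L, F x = f x := fun x hx => by
    simp [F, min_eq_left hx.2, max_eq_right hx.1]
  have hweak : (∀ φ : ℝ → ℝ, ContDiff ℝ (⊤ : ℕ∞) φ → HasCompactSupport φ →
      tsupport φ ⊆ Ioo 0 L → (∀ x, 0 ≤ φ x) →
      (∫ x in Ioo (0:ℝ) L, h x ^ (1 / (N - 1)) * deriv (deriv φ) x)
        + κ * ∫ x in Ioo (0:ℝ) L, h x ^ (1 / (N - 1)) * φ x ≤ 0) ↔ Weak κ L F := by
    refine forall_congr' fun φ => forall_congr' fun _ => forall_congr' fun _ =>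
      forall_congr' fun hs => forall_congr' fun _ => ?_
    have e1 := setIntegral_eq hFf hs
    have e2 := setIntegral_eq hFf (ψ := deriv (deriv φ))
      ((tsupport_deriv_subset ..).trans ((tsupport_deriv_subset ..).trans hs))
    simp only [hf] at e1 e2
    rw [e1, e2]
  rw [hweak]
  change _ ↔ ∀ R0 R1 : ℝ, 0 ≤ R0 → R0 ≤ R1 → R1 ≤ L → ∀ t ∈ Icc (0:ℝ) 1,
      sigmaCoef K (N - 1) (1 - t) (R1 - R0) * ENNReal.ofReal (f R0)
        + sigmaCoef K (N - 1) t (R1 - R0) * ENNReal.ofReal (f R1)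
        ≤ ENNReal.ofReal (f ((1 - t) * R0 + t * R1))
  constructor
  · intro hw
    have hdiam : κ * L ^ 2 < Real.pi ^ 2 := by
      by_contra! hcon
      have hpi := Real.pi_pos
      have hκ0 : 0 < κ := by
        by_contra! h0
        nlinarith [sq_nonneg L, pow_pos hpi 2]
      -- the comparison on `[0, b]` with `b = π / √κ ≤ L`, where `s b = 0`
      set b := Real.pi / Real.sqrt κ with hb
      have hsq : 0 < Real.sqrt κ := Real.sqrt_pos.2 hκ0
      have hb0 : 0 < b := div_pos hpi hsq
      have hbeq : κ * b ^ 2 = Real.pi ^ 2 := by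
        rw [hb, div_pow, Real.sq_sqrt hκ0.le]; field_simp
      have hbL : b ≤ L := by
        refine (pow_le_pow_iff_left₀ hb0.le hL.le two_ne_zero).1 ?_
        exact le_of_mul_le_mul_left (hbeq.trans_le hcon) hκ0
      have h1 := hw.closed hT hF hL le_rfl (x := b / 2) (b := b) (by linarith) (by linarith) hbL
        (by rw [sub_zero, hbeq])
      have h2 : 0 < s (b / 2) := hT.pos _ (by linarith) (by nlinarith [pow_pos hpi 2])
      rw [sub_zero, sub_zero, hT.zero b hb0.le hbeq, show b - b / 2 = b / 2 by ring, zero_mul,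
        hFf 0 ⟨le_rfl, hL.le⟩, hFf b ⟨hb0.le, hbL⟩] at h1
      have := mul_pos h2 (hfpos 0 ⟨le_rfl, hL.le⟩)
      have := mul_pos h2 (hfpos b ⟨hb0.le, hbL⟩)
      linarith
    intro R0 R1 h0 h01 h1 t ht
    have f0 := hfpos R0 ⟨h0, h01.trans h1⟩
    have f1 := hfpos R1 ⟨h0.trans h01, h1⟩
    have t0 := ht.1
    have t1 : 0 ≤ 1 - t := by linarith [ht.2]
    rcases h01.eq_or_lt with rfl | hlt
    · have hs0 : ∀ t, sigmaCoef K (N - 1) t (R0 - R0) = ENNReal.ofReal t := fun t => by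
        rw [sigmaCoef, if_neg (by simp; positivity), if_neg (by simp), if_pos (by simp)]
      rw [hs0, hs0, ← add_mul, ← ENNReal.ofReal_add t1 t0]
      simp [← add_mul]
    · have hθ : 0 < R1 - R0 := by linarith
      have hd : κ * (R1 - R0) ^ 2 < Real.pi ^ 2 := by
        rcases le_total κ 0 with hk | hk
        · nlinarith [pow_pos Real.pi_pos 2, sq_nonneg (R1 - R0)]
        · refine lt_of_le_of_lt ?_ hdiam
          have : R1 - R0 ≤ L := by linarith
          gcongr
      have hsp := hT.pos _ hθ hd
      have hs1 : 0 ≤ s ((1 - t) * (R1 - R0)) := hT.nonneg hd.le (by positivity) (by nlinarith)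
      have hs2 : 0 ≤ s (t * (R1 - R0)) := hT.nonneg hd.le (by positivity) (by nlinarith [ht.2])
      rw [hσ _ _ hθ hd, hσ _ _ hθ hd, ← ENNReal.ofReal_mul (by positivity),
        ← ENNReal.ofReal_mul (by positivity), ← ENNReal.ofReal_add (by positivity) (by positivity)]
      apply ENNReal.ofReal_le_ofReal
      have l1 : R0 ≤ (1 - t) * R0 + t * R1 := by nlinarith
      have l2 : (1 - t) * R0 + t * R1 ≤ R1 := by nlinarith
      have := hw.closed hT hF hL h0 l1 l2 h1 hd.le
      rw [hFf _ ⟨h0, h01.trans h1⟩, hFf _ ⟨h0.trans h01, h1⟩,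
        hFf _ ⟨h0.trans l1, l2.trans h1⟩,
        show R1 - ((1 - t) * R0 + t * R1) = (1 - t) * (R1 - R0) by ring,
        show (1 - t) * R0 + t * R1 - R0 = t * (R1 - R0) by ring] at this
      rw [div_mul_eq_mul_div, div_mul_eq_mul_div, ← add_div, div_le_iff₀ hsp]
      linarith
  · intro H
    have hev : ∀ᶠ δ in nhds (0:ℝ), κ * (2 * δ) ^ 2 < Real.pi ^ 2 := by
      have : Continuous fun δ : ℝ => κ * (2 * δ) ^ 2 := by fun_prop
      refine this.continuousAt.eventually_lt continuousAt_const ?_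
      simpa using pow_pos Real.pi_pos 2
    obtain ⟨δ₀, hδ₀, hball⟩ := Metric.eventually_nhds_iff.1 hev
    refine weak_of_midpoint hT hF ⟨δ₀, hδ₀, fun x δ hδ hδδ hx0 hxL => ?_⟩
    have hd : κ * (2 * δ) ^ 2 < Real.pi ^ 2 := hball (by simpa [abs_of_pos hδ] using hδδ)
    have m0 : x - δ ∈ Icc 0 L := ⟨hx0, by linarith⟩
    have m1 : x + δ ∈ Icc 0 L := ⟨by linarith, hxL⟩
    have m : x ∈ Icc 0 L := ⟨by linarith, by linarith⟩
    have key := H (x - δ) (x + δ) hx0 (by linarith) hxL (1 / 2) ⟨by norm_num, by norm_num⟩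
    have h2δ : 0 < 2 * δ := by linarith
    have hs2 := hT.pos _ h2δ hd
    have hs1 : 0 < s δ := by
      refine hT.pos _ hδ (lt_of_le_of_lt ?_ (max_lt hd (pow_pos Real.pi_pos 2)))
      rcases le_total κ 0 with hk | hk
      · exact le_max_of_le_right (by nlinarith [sq_nonneg Real.pi, sq_nonneg δ])
      · exact le_max_of_le_left (by nlinarith [mul_nonneg hk (sq_nonneg δ)])
    have f0 := hfpos _ m0
    have f1 := hfpos _ m1
    rw [show x + δ - (x - δ) = 2 * δ by ring, show (1:ℝ) - 1 / 2 = 1 / 2 by norm_num,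
      show 1 / 2 * (x - δ) + 1 / 2 * (x + δ) = x by ring, hσ _ _ h2δ hd,
      show 1 / 2 * (2 * δ) = δ by ring, ← ENNReal.ofReal_mul (by positivity),
      ← ENNReal.ofReal_mul (by positivity), ← ENNReal.ofReal_add (by positivity) (by positivity),
      ENNReal.ofReal_le_ofReal_iff (hfpos x m).le, ← mul_add, div_mul_eq_mul_div,
      div_le_iff₀ hs2, two_mul, hT.add] at key
    rw [hFf _ m0, hFf _ m1, hFf _ m]
    refine le_of_mul_le_mul_left ?_ hs1
    linarith

end CDNote
end
end
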